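/- arXiv:2407.06550 — 5 statements merged into one kernel-verified Lean document; each statement's English description precedes it below -/
import Mathlib

section
/- The matrices E_0,…,E_m are the primitive idempotents of the wreath product 𝔛(m,1): E_iE_j = δ_{ij}E_i for all 0 ≤ i,j ≤ m; E_0 + E_1 + ⋯ + E_m equals the identity matrix of Mat_X(ℂ); |X|·E_0 equals the all-ones matrix J_X; and each E_j lies in the ℂ-linear span of the adjacency matrices {A_0,A_1,…,A_m}. -/
/-!
The Kronecker factors telescope. Let `P k` (`partialAvg`) be `J̃` on the first `k` coordinates
tensored with the identity on the others, and put `P k = 0` for `k > m`. Averaging over the first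
`k` coordinates and then over the first `l` is averaging over the first `max k l`, so
`P k * P l = P (max k l)`; moreover `P 0 = 1`. Expanding the single factor `I - J̃` gives
`E_j = P (m - j) - P (m - j + 1)`, where the convention `P (m + 1) = 0` covers `j = 0`. The
orthogonality relations and `∑ E_j = 1` are then formal.

Similarly, if `B k` has `J` on the first `k` coordinates and `I` on the others, then
`A_{k+1} = B (k + 1) - B k` and `B 0 = A_0`, so each `B k` with `k ≤ m` is a sum of adjacency
matrices; `P k` is a scalar multiple of `B k`. Both `P` and `B` are instances of `prefixMat`.
-/

open Matrix BigOperators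

noncomputable section

namespace OHS

variable (m : ℕ) (q : ℕ → ℕ)

/-- The vertex set `X = ∏_{s=1}^m ℤ/q_sℤ` of `𝔛(m,1)`. -/
abbrev Vtx : Type := (i : Fin m) → ZMod (q ((i : ℕ) + 1))

/-- The adjacency matrices `A_j` of `𝔛(m,1)`, given entrywise
(the Kronecker product `J_1⊗⋯⊗J_{j−1}⊗(J_j−I_j)⊗I_{j+1}⊗⋯⊗I_m`, and `A_0` the identity). -/
def AdjOne (j : ℕ) : Matrix (Vtx m q) (Vtx m q) ℂ :=
  Matrix.of fun x y => ∏ i : Fin m,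
    if (i : ℕ) + 1 < j then (1 : ℂ)
    else if (i : ℕ) + 1 = j then (if x i = y i then 0 else 1)
    else if x i = y i then 1 else 0

/-- The primitive idempotents `E_j` of `𝔛(m,1)`, given entrywise
(`E_0 = J̃_1⊗⋯⊗J̃_m`, `E_j = J̃_1⊗⋯⊗J̃_{m−j}⊗(I_{m−j+1}−J̃_{m−j+1})⊗I_{m−j+2}⊗⋯⊗I_m`). -/
def IdemOne (j : ℕ) : Matrix (Vtx m q) (Vtx m q) ℂ :=
  Matrix.of fun x y => ∏ i : Fin m,
    if (i : ℕ) + 1 < m - j + 1 then ((q ((i : ℕ) + 1) : ℂ))⁻¹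
    else if (i : ℕ) + 1 = m - j + 1 then
      (if x i = y i then (1 : ℂ) else 0) - ((q ((i : ℕ) + 1) : ℂ))⁻¹
    else if x i = y i then 1 else 0

/-- The dual primitive idempotents `E*_j` w.r.t. the base point `0`:
the diagonal matrix whose `(y,y)` entry is the `(0,y)` entry of `A_j`. -/
def DualIdemOne (j : ℕ) : Matrix (Vtx m q) (Vtx m q) ℂ :=
  Matrix.diagonal fun y => AdjOne m q j 0 y

/-- The valency `k_j`: `k_0 = 1` and `k_j = (q_j−1)∏_{s<j} q_s`. -/
def valency (j : ℕ) : ℕ :=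
  ∏ i : Fin m,
    if (i : ℕ) + 1 < j then q ((i : ℕ) + 1)
    else if (i : ℕ) + 1 = j then q ((i : ℕ) + 1) - 1
    else 1

/-- The multiplicity `m_j`: `m_0 = 1` and `m_j = (q_{m−j+1}−1)∏_{s=m−j+2}^m q_s`. -/
def multiplicity (j : ℕ) : ℕ :=
  ∏ i : Fin m,
    if m - j + 1 < (i : ℕ) + 1 then q ((i : ℕ) + 1)
    else if (i : ℕ) + 1 = m - j + 1 then q ((i : ℕ) + 1) - 1
    else 1

section WithFintype

variable [∀ i, NeZero (q i)]

/-- `F_j = (|X|/m_j)·E_j E*_0 E_j`. -/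
def Fmat (j : ℕ) : Matrix (Vtx m q) (Vtx m q) ℂ :=
  ((Fintype.card (Vtx m q) : ℂ) / (multiplicity m q j : ℂ)) •
    (IdemOne m q j * DualIdemOne m q 0 * IdemOne m q j)

/-- `F*_j = (|X|/k_j)·E*_j E_0 E*_j`. -/
def FmatStar (j : ℕ) : Matrix (Vtx m q) (Vtx m q) ℂ :=
  ((Fintype.card (Vtx m q) : ℂ) / (valency m q j : ℂ)) •
    (DualIdemOne m q j * IdemOne m q 0 * DualIdemOne m q j)

/-- `G_j = E_j − F_j`. -/
def Gmat (j : ℕ) : Matrix (Vtx m q) (Vtx m q) ℂ := IdemOne m q j - Fmat m q j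

/-- `G*_j = E*_j − F*_j`. -/
def GmatStar (j : ℕ) : Matrix (Vtx m q) (Vtx m q) ℂ :=
  DualIdemOne m q j - FmatStar m q j

/-- The Terwilliger algebra of `𝔛(m,1)` w.r.t. the base point `0`: the unital
ℂ-subalgebra generated by the adjacency matrices and the dual idempotents. -/
def Ter1 : Subalgebra ℂ (Matrix (Vtx m q) (Vtx m q) ℂ) :=
  Algebra.adjoin ℂ
    ({M | ∃ j ≤ m, M = AdjOne m q j} ∪ {M | ∃ j ≤ m, M = DualIdemOne m q j})

end WithFintype

/-- `Λ(m)`: pairs `(i,j)` with `1 ≤ i,j ≤ m` and either `i+j > m+1`,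
or `i+j = m+1` and `q_i ≥ 3`. -/
def LamSet : Finset (ℕ × ℕ) :=
  ((Finset.Icc 1 m) ×ˢ (Finset.Icc 1 m)).filter
    fun p => m + 1 < p.1 + p.2 ∨ (p.1 + p.2 = m + 1 ∧ 3 ≤ q p.1)

variable (n : ℕ)

/-- The largest (1-based) position where `v` is nonzero; `0` if `v = 0`. -/
def level (v : Vtx m q) : ℕ :=
  (Finset.univ.filter fun i : Fin m => v i ≠ 0).sup fun i => (i : ℕ) + 1

/-- `I(m,n)`: tuples `(λ_0,…,λ_m)` of naturals summing to `n`. -/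
def ShapeSet : Finset (Fin (m + 1) → ℕ) :=
  (Fintype.piFinset fun _ : Fin (m + 1) => Finset.range (n + 1)).filter
    fun lam => ∑ j, lam j = n

/-- `x ∈ X^n` has shape `λ`. -/
def hasShape (x : Fin n → Vtx m q) (lam : Fin (m + 1) → ℕ) : Prop :=
  ∀ j : Fin (m + 1),
    (Finset.univ.filter fun i : Fin n => level m q (x i) = (j : ℕ)).card = lam j

instance (x : Fin n → Vtx m q) (lam : Fin (m + 1) → ℕ) :
    Decidable (hasShape m q n x lam) := by
  unfold hasShape; infer_instance

/-- The `λ`-th adjacency matrix `𝐀_λ` of the ordered Hamming scheme `𝔛(m,n)`. -/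
def AdjN (lam : Fin (m + 1) → ℕ) :
    Matrix (Fin n → Vtx m q) (Fin n → Vtx m q) ℂ :=
  Matrix.of fun x y => if hasShape m q n (fun i => x i - y i) lam then 1 else 0

/-- The `λ`-th dual primitive idempotent `𝐄*_λ` of `𝔛(m,n)` (base point `0`). -/
def DualIdemN (lam : Fin (m + 1) → ℕ) :
    Matrix (Fin n → Vtx m q) (Fin n → Vtx m q) ℂ :=
  Matrix.diagonal fun y => if hasShape m q n y lam then 1 else 0

/-- `L_λ(M_•)`: entrywise, the sum over functions `f` with `#f⁻¹(j) = λ_j` of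
`∏_i (M_{f(i)})_{x_i,y_i}`. -/
def Lmat {ι : Type*} [Fintype ι] [DecidableEq ι]
    (M : ι → Matrix (Vtx m q) (Vtx m q) ℂ) (lam : ι → ℕ) :
    Matrix (Fin n → Vtx m q) (Fin n → Vtx m q) ℂ :=
  Matrix.of fun x y =>
    ∑ f ∈ Finset.univ.filter
        (fun f : Fin n → ι =>
          ∀ j, (Finset.univ.filter fun i => f i = j).card = lam j),
      ∏ i, M (f i) (x i) (y i)

/-- The Kronecker product `M_1⊗⋯⊗M_n`. -/
def kron (M : Fin n → Matrix (Vtx m q) (Vtx m q) ℂ) :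
    Matrix (Fin n → Vtx m q) (Fin n → Vtx m q) ℂ :=
  Matrix.of fun x y => ∏ i, M i (x i) (y i)

section WithFintype2

variable [∀ i, NeZero (q i)]

/-- The Terwilliger algebra `𝐓(m,n)` of `𝔛(m,n)` w.r.t. the zero base point. -/
def TerN : Subalgebra ℂ (Matrix (Fin n → Vtx m q) (Fin n → Vtx m q) ℂ) :=
  Algebra.adjoin ℂ
    ({M | ∃ lam ∈ ShapeSet m n, M = AdjN m q n lam} ∪
      {M | ∃ lam ∈ ShapeSet m n, M = DualIdemN m q n lam})

end WithFintype2

/-- The entry `P_i(j; r)` of the first eigenmatrix for the parameter sequence `r`. -/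
def PEnt (r : ℕ → ℕ) (i j : ℕ) : ℂ :=
  if i + j < m + 1 then (valency m r i : ℂ)
  else if i + j = m + 1 then -(valency m r i : ℂ) / ((r i : ℂ) - 1)
  else 0

/-- The multivariate Krawtchouk polynomial `K_μ(λ; r_1,…,r_m)`: the coefficient of
`z^μ` in `∏_{j=0}^m (Σ_{i=0}^m P_i(j;r) z_i)^{λ_j}`. -/
def Kraw (r : ℕ → ℕ) (mu lam : Fin (m + 1) → ℕ) : ℂ :=
  MvPolynomial.coeff (Finsupp.equivFunOnFinite.symm mu)
    (∏ j : Fin (m + 1),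
      (∑ i : Fin (m + 1),
        MvPolynomial.C (PEnt m r (i : ℕ) (j : ℕ)) * MvPolynomial.X i) ^ lam j)

/-- `C(m,n)`: tuples `(τ_1,…,τ_m)` of naturals summing to `n`. -/
def Ctuples : Finset (Fin m → ℕ) :=
  (Fintype.piFinset fun _ : Fin m => Finset.range (n + 1)).filter
    fun t => ∑ i, t i = n

/-- `Θ(λ,μ)`: nonnegative-integer `m×m` matrices supported on `Λ(m)` with row
sums `λ` and column sums `μ`. -/
def ThetaSet (lam mu : Fin m → ℕ) : Finset (Fin m → Fin m → ℕ) :=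
  (Fintype.piFinset fun _ : Fin m =>
      Fintype.piFinset fun _ : Fin m => Finset.range (n + 1)).filter
    fun c =>
      (∀ i j : Fin m, ((i : ℕ) + 1, (j : ℕ) + 1) ∉ LamSet m q → c i j = 0) ∧
      (∀ i, ∑ j, c i j = lam i) ∧ (∀ j, ∑ i, c i j = mu j)

/-- `Ω(m,n)`: the pairs `(λ,μ)` with `Θ(λ,μ) ≠ ∅`. -/
def OmegaSet : Finset ((Fin m → ℕ) × (Fin m → ℕ)) :=
  ((Ctuples m n) ×ˢ (Ctuples m n)).filter
    fun p => (ThetaSet m q n p.1 p.2).Nonempty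

/-- The permutation matrix `P_σ` of the coordinate permutation
`(x_1,…,x_n) ↦ (x_{σ⁻¹(1)},…,x_{σ⁻¹(n)})` of `X^n`. -/
def permMat (σ : Equiv.Perm (Fin n)) :
    Matrix (Fin n → Vtx m q) (Fin n → Vtx m q) ℂ :=
  Matrix.of fun x y => if x = y ∘ ⇑σ⁻¹ then 1 else 0

/-- The Kronecker product with `c i • J` at the (0-based) positions `i < k` and the identity at
the remaining positions. -/
def prefixMat (m : ℕ) (q : ℕ → ℕ) (c : ℕ → ℂ) (k : ℕ) : Matrix (Vtx m q) (Vtx m q) ℂ :=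
  Matrix.of fun x y => ∏ i : Fin m,
    if (i : ℕ) < k then c i else if x i = y i then 1 else 0

/-- Multilinearity of the Kronecker product in position `k`; the scalar `e` allows for either sign
of the difference. -/
lemma prefixMat_sub (m : ℕ) (q : ℕ → ℕ) (c : ℕ → ℂ) (e : ℂ) {k : ℕ} (hk : k < m)
    (x y : Vtx m q) :
    e * (prefixMat m q c k x y - prefixMat m q c (k + 1) x y) =
      ∏ i : Fin m, if (i : ℕ) < k then c i
        else if (i : ℕ) = k then e * ((if x i = y i then 1 else 0) - c i)
        else if x i = y i then 1 else 0 := by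
  have key : ∀ f : Fin m → ℂ,
      ∏ i, f i = f ⟨k, hk⟩ * ∏ i ∈ Finset.univ.erase ⟨k, hk⟩, f i := fun f =>
    (Finset.mul_prod_erase _ f (Finset.mem_univ _)).symm
  simp only [prefixMat, Matrix.of_apply]
  rw [key, key, key]
  have h1 : ∏ i ∈ Finset.univ.erase (⟨k, hk⟩ : Fin m),
        (if (i : ℕ) < k + 1 then c i else if x i = y i then 1 else 0) =
      ∏ i ∈ Finset.univ.erase (⟨k, hk⟩ : Fin m),
        (if (i : ℕ) < k then c i else if x i = y i then 1 else 0) := by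
    refine Finset.prod_congr rfl fun i hi => ?_
    have hne : (i : ℕ) ≠ k := fun h => (Finset.mem_erase.1 hi).1 (Fin.ext h)
    simp only [show (i : ℕ) < k + 1 ↔ (i : ℕ) < k by omega]
  have h2 : ∏ i ∈ Finset.univ.erase (⟨k, hk⟩ : Fin m),
        (if (i : ℕ) < k then c i
          else if (i : ℕ) = k then e * ((if x i = y i then 1 else 0) - c i)
          else if x i = y i then 1 else 0) =
      ∏ i ∈ Finset.univ.erase (⟨k, hk⟩ : Fin m),
        (if (i : ℕ) < k then c i else if x i = y i then 1 else 0) := by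
    refine Finset.prod_congr rfl fun i hi => ?_
    have hne : (i : ℕ) ≠ k := fun h => (Finset.mem_erase.1 hi).1 (Fin.ext h)
    simp only [hne, if_false]
  rw [h1, h2]
  simp only [lt_irrefl, if_false, if_true, Nat.lt_succ_self]
  ring

lemma prefixMat_zero (m : ℕ) (q : ℕ → ℕ) (c : ℕ → ℂ) : prefixMat m q c 0 = 1 := by
  ext x y
  simp only [prefixMat, Matrix.of_apply, Nat.not_lt_zero, if_false, Matrix.one_apply]
  rw [Finset.prod_ite_zero]
  simp [funext_iff]

/-- The averaging matrix `P k`: `J̃` on the first `k` coordinates and the identity on the others,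
extended by `P k = 0` for `k > m`. -/
def partialAvg (m : ℕ) (q : ℕ → ℕ) (k : ℕ) : Matrix (Vtx m q) (Vtx m q) ℂ :=
  if k ≤ m then prefixMat m q (fun i => (q (i + 1) : ℂ)⁻¹) k else 0

lemma prefixMat_mul (m : ℕ) (q : ℕ → ℕ) [∀ i, NeZero (q i)] (k l : ℕ) :
    prefixMat m q (fun i => (q (i + 1) : ℂ)⁻¹) k * prefixMat m q (fun i => (q (i + 1) : ℂ)⁻¹) l =
      prefixMat m q (fun i => (q (i + 1) : ℂ)⁻¹) (max k l) := by
  ext x y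
  simp only [prefixMat, Matrix.of_apply, Matrix.mul_apply, ← Finset.prod_mul_distrib]
  -- distributivity turns the sum over `Vtx` into a product of sums over the single coordinates
  rw [← Fintype.prod_sum (fun (i : Fin m) (z : ZMod (q ((i : ℕ) + 1))) =>
    (if (i : ℕ) < k then (q ((i : ℕ) + 1) : ℂ)⁻¹ else if x i = z then 1 else 0) *
    (if (i : ℕ) < l then (q ((i : ℕ) + 1) : ℂ)⁻¹ else if z = y i then 1 else 0))]
  refine Finset.prod_congr rfl fun i _ => ?_
  have hq0 : (q ((i : ℕ) + 1) : ℂ) ≠ 0 := Nat.cast_ne_zero.2 (NeZero.ne _)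
  by_cases hk : (i : ℕ) < k <;> by_cases hl : (i : ℕ) < l <;>
    simp [hk, hl, ZMod.card, hq0]

lemma partialAvg_mul (m : ℕ) (q : ℕ → ℕ) [∀ i, NeZero (q i)] (k l : ℕ) :
    partialAvg m q k * partialAvg m q l = partialAvg m q (max k l) := by
  unfold partialAvg
  by_cases hk : k ≤ m <;> by_cases hl : l ≤ m <;> simp [hk, hl, prefixMat_mul]

lemma IdemOne_eq (m : ℕ) (q : ℕ → ℕ) (j : ℕ) (hj : j ≤ m) :
    IdemOne m q j = partialAvg m q (m - j) - partialAvg m q (m - j + 1) := by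
  ext x y
  rcases Nat.eq_zero_or_pos j with rfl | hj0
  · simp only [partialAvg, IdemOne, prefixMat, Nat.sub_zero, le_refl, if_true,
      show ¬ m + 1 ≤ m by omega, if_false, Matrix.of_apply, sub_zero]
    refine Finset.prod_congr rfl fun i _ => ?_
    simp [i.2]
  · have h := prefixMat_sub m q (fun i => (q (i + 1) : ℂ)⁻¹) 1 (show m - j < m by omega) x y
    simp only [one_mul] at h
    simp only [partialAvg, show m - j ≤ m by omega, show m - j + 1 ≤ m by omega, if_true,
      Matrix.sub_apply, h, IdemOne, Matrix.of_apply, add_lt_add_iff_right, add_left_inj]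

lemma AdjOne_zero (m : ℕ) (q : ℕ → ℕ) : AdjOne m q 0 = prefixMat m q (fun _ => 1) 0 := by
  ext x y
  simp [AdjOne, prefixMat]

lemma AdjOne_succ (m : ℕ) (q : ℕ → ℕ) (k : ℕ) (hk : k < m) :
    AdjOne m q (k + 1) = prefixMat m q (fun _ => 1) (k + 1) - prefixMat m q (fun _ => 1) k := by
  ext x y
  have h := prefixMat_sub m q (fun _ => 1) (-1) hk x y
  rw [Matrix.sub_apply, ← neg_sub, ← neg_one_mul, h]
  simp only [AdjOne, Matrix.of_apply, add_lt_add_iff_right, add_left_inj]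
  refine Finset.prod_congr rfl fun i _ => ?_
  split_ifs <;> simp

lemma prefixMat_one_mem (m : ℕ) (q : ℕ → ℕ) (k : ℕ) (hk : k ≤ m) :
    prefixMat m q (fun _ => 1) k ∈ Submodule.span ℂ {M | ∃ i ≤ m, M = AdjOne m q i} := by
  induction k with
  | zero => exact Submodule.subset_span ⟨0, hk, (AdjOne_zero m q).symm⟩
  | succ k ih =>
    rw [← sub_add_cancel (prefixMat m q (fun _ => 1) (k + 1)) (prefixMat m q (fun _ => 1) k),
      ← AdjOne_succ m q k hk]
    exact add_mem (Submodule.subset_span ⟨k + 1, hk, rfl⟩) (ih (by omega))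

lemma prefixMat_eq_smul (m : ℕ) (q : ℕ → ℕ) (c : ℕ → ℂ) (k : ℕ) :
    prefixMat m q c k =
      (∏ i : Fin m, if (i : ℕ) < k then c i else 1) • prefixMat m q (fun _ => 1) k := by
  ext x y
  simp only [prefixMat, Matrix.smul_apply, Matrix.of_apply, smul_eq_mul,
    ← Finset.prod_mul_distrib]
  refine Finset.prod_congr rfl fun i _ => ?_
  by_cases h : (i : ℕ) < k <;> simp [h]

lemma partialAvg_mem (m : ℕ) (q : ℕ → ℕ) (k : ℕ) :
    partialAvg m q k ∈ Submodule.span ℂ {M | ∃ i ≤ m, M = AdjOne m q i} := by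
  unfold partialAvg
  split_ifs with hk
  · rw [prefixMat_eq_smul]
    exact Submodule.smul_mem _ _ (prefixMat_one_mem m q k hk)
  · exact zero_mem _

/-- The matrices `E_0,…,E_m` are the primitive idempotents of `𝔛(m,1)`:
`E_iE_j = δ_{ij}E_i`, they sum to the identity, `|X|·E_0` is the all-ones matrix,
and each `E_j` lies in the ℂ-linear span of the adjacency matrices. -/
theorem stmt1 (m : ℕ) (hm : 1 ≤ m) (q : ℕ → ℕ) [∀ i, NeZero (q i)]
    (hq : ∀ i, 2 ≤ q i) :
    (∀ i j : ℕ, i ≤ m → j ≤ m →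
      IdemOne m q i * IdemOne m q j = if i = j then IdemOne m q i else 0) ∧
    (∑ j ∈ Finset.range (m + 1), IdemOne m q j) = 1 ∧
    (Fintype.card (Vtx m q) : ℂ) • IdemOne m q 0 = Matrix.of (fun _ _ => 1) ∧
    (∀ j : ℕ, j ≤ m →
      IdemOne m q j ∈ Submodule.span ℂ {M | ∃ i ≤ m, M = AdjOne m q i}) := by
  refine ⟨fun i j hi hj => ?_, ?_, ?_, fun j hj => ?_⟩
  · rw [IdemOne_eq m q i hi, IdemOne_eq m q j hj, sub_mul, mul_sub, mul_sub]
    simp only [partialAvg_mul]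
    rcases lt_trichotomy i j with h | rfl | h
    · rw [if_neg h.ne, max_eq_left (by omega), max_eq_left (by omega), max_eq_left (by omega),
        max_eq_left (by omega)]
      abel
    · rw [if_pos rfl, max_self, max_self, max_eq_right (by omega), max_eq_left (by omega)]
      abel
    · rw [if_neg h.ne', max_eq_right (by omega), max_eq_right (by omega),
        max_eq_right (by omega), max_eq_right (by omega)]
      abel
  · have h : ∀ j ∈ Finset.range (m + 1), IdemOne m q j =
        partialAvg m q (m + 1 - (j + 1)) - partialAvg m q (m + 1 - j) := by
      intro j hj
      have hj' : j ≤ m := Nat.lt_succ_iff.1 (Finset.mem_range.1 hj)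
      rw [IdemOne_eq m q j hj', Nat.add_sub_add_right, Nat.sub_add_comm hj']
    rw [Finset.sum_congr rfl h, Finset.sum_range_sub (fun j => partialAvg m q (m + 1 - j))]
    simp [partialAvg, prefixMat_zero]
  · ext x y
    simp only [IdemOne, Matrix.smul_apply, Matrix.of_apply, smul_eq_mul, Fintype.card_pi,
      ZMod.card, Nat.cast_prod, ← Finset.prod_mul_distrib, Nat.sub_zero]
    refine Finset.prod_eq_one fun i _ => ?_
    have hq0 : (q ((i : ℕ) + 1) : ℂ) ≠ 0 := Nat.cast_ne_zero.2 (NeZero.ne _)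
    simp [i.2, hq0]
  · rw [IdemOne_eq m q j hj]
    exact sub_mem (partialAvg_mem m q _) (partialAvg_mem m q _)

end OHS

end
end

section
/- For all 0 ≤ i,j ≤ m one has A_jE_i = P_j(i)·E_i, where P_j(i) = k_j if i+j < m+1, P_j(i) = −k_j/(q_j−1) if i+j = m+1, and P_j(i) = 0 if i+j > m+1; and E_i ∘ A_j = |X|^{−1}Q_i(j)·A_j (Hadamard, i.e. entrywise, product), where Q_i(j) = m_i if i+j < m+1, Q_i(j) = −m_i/(q_{m−i+1}−1) if i+j = m+1, and Q_i(j) = 0 if i+j > m+1. In other words, P and Q are the first and second eigenmatrices of 𝔛(m,1). -/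
/-!
All matrices involved are Kronecker products, so both identities can be verified one tensor
factor at a time. Put `t = m - i + 1`; at the coordinate `s` the factor of `A_j` is `J`, `J - I`
or `I` according to whether `s < j`, `s = j` or `s > j`, and the factor of `E_i` is `J̃`, `I - J̃`
or `I` according to whether `s < t`, `s = t` or `s > t`.

* If `j < t`, every factor of `A_j E_i` is a scalar times the factor of `E_i`, the scalars being
  the factors of `k_j`; likewise every factor of `E_i ∘ A_j` is a scalar times that of `A_j`.
* If `j = t`, the same holds except that at `s = t` the scalar is `-1` (resp. `-1/q_t`), because
  `(J - I)(I - J̃) = -(I - J̃)` and `(I - J̃) ∘ (J - I) = -(1/q_t)(J - I)`. The scalar therefore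
  differs from the previous one by the factor `-1/(q_t - 1)`.
* If `j > t`, one factor vanishes: `J (I - J̃) = 0` at `s = t` for the ordinary product, and
  `I ∘ (J - I) = 0` at `s = j` for the entrywise product.
-/

open Matrix BigOperators

noncomputable section

namespace OHS

variable (m : ℕ) (q : ℕ → ℕ)

variable (n : ℕ)

/-- The ordinary product of two matrices of Kronecker type, entrywise. -/
lemma kron_mul_apply {m : ℕ} {α : Fin m → Type} [∀ s, Fintype (α s)]
    (f g : ∀ s, α s → α s → ℂ) (x y : ∀ s, α s) :
    ((Matrix.of fun x y : ∀ s, α s => ∏ s, f s (x s) (y s)) *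
      (Matrix.of fun x y : ∀ s, α s => ∏ s, g s (x s) (y s))) x y =
      ∏ s, ∑ z, f s (x s) z * g s z (y s) := by
  classical
  simp only [Matrix.mul_apply, Matrix.of_apply, ← Finset.prod_mul_distrib]
  rw [Finset.prod_univ_sum, Fintype.piFinset_univ]

/-- If `j` lies in `1..m`, a product over `Fin m` whose factor at the coordinate `j` (indexed by
`j - 1`) is multiplied by `r` is multiplied by `r`. -/
lemma prod_mul_ite {m j : ℕ} (h1 : 1 ≤ j) (hj : j ≤ m) (c : Fin m → ℂ) (r : ℂ) :
    ∏ s : Fin m, c s * (if (s : ℕ) + 1 = j then r else 1) = (∏ s, c s) * r := by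
  rw [Finset.prod_mul_distrib]
  congr 1
  rw [Finset.prod_eq_single ⟨j - 1, by omega⟩]
  · simp only [ite_eq_left_iff]
    omega
  · intro b _ hb
    rw [if_neg]
    intro h
    exact hb (Fin.ext (by simp only; omega))
  · simp

lemma valency_cast (m : ℕ) (q : ℕ → ℕ) (hq : ∀ i, 2 ≤ q i) (j : ℕ) :
    (valency m q j : ℂ) = ∏ s : Fin m,
      if (s : ℕ) + 1 < j then (q ((s : ℕ) + 1) : ℂ)
      else if (s : ℕ) + 1 = j then (q ((s : ℕ) + 1) : ℂ) - 1 else 1 := by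
  rw [valency, Nat.cast_prod]
  refine Finset.prod_congr rfl fun s _ => ?_
  have := hq ((s : ℕ) + 1)
  split_ifs
  · rfl
  · rw [Nat.cast_sub (by omega), Nat.cast_one]
  · simp

/-- `m_i / |X|` as a product over the coordinates. -/
lemma card_inv_mul_multiplicity (m : ℕ) (q : ℕ → ℕ) [∀ i, NeZero (q i)] (hq : ∀ i, 2 ≤ q i)
    (i : ℕ) :
    (Fintype.card (Vtx m q) : ℂ)⁻¹ * (multiplicity m q i : ℂ) = ∏ s : Fin m,
      if (s : ℕ) + 1 < m - i + 1 then (q ((s : ℕ) + 1) : ℂ)⁻¹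
      else if (s : ℕ) + 1 = m - i + 1 then 1 - (q ((s : ℕ) + 1) : ℂ)⁻¹ else 1 := by
  rw [multiplicity, Nat.cast_prod, Fintype.card_pi, Nat.cast_prod, ← Finset.prod_inv_distrib,
    ← Finset.prod_mul_distrib]
  refine Finset.prod_congr rfl fun s _ => ?_
  have h2 := hq ((s : ℕ) + 1)
  have h0 : (q ((s : ℕ) + 1) : ℂ) ≠ 0 := NeZero.ne _
  rw [ZMod.card]
  split_ifs <;> first | omega | skip
  · exact inv_mul_cancel₀ h0
  · rw [Nat.cast_sub (by omega), Nat.cast_one]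
    field_simp
  · simp

lemma adjOne_mul_idemOne (m : ℕ) (q : ℕ → ℕ) [∀ i, NeZero (q i)] (hq : ∀ i, 2 ≤ q i)
    (i j : ℕ) (hi : i ≤ m) (hj : j ≤ m) :
    AdjOne m q j * IdemOne m q i =
      (if i + j < m + 1 then (valency m q j : ℂ)
        else if i + j = m + 1 then -(valency m q j : ℂ) / ((q j : ℂ) - 1)
        else 0) • IdemOne m q i := by
  have q0 : ∀ s, (q s : ℂ) ≠ 0 := fun s => NeZero.ne _
  have q1 : ∀ s, (q s : ℂ) - 1 ≠ 0 := fun s => by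
    have := hq s
    rw [sub_ne_zero]
    exact_mod_cast (by omega : q s ≠ 1)
  ext x y
  rw [AdjOne, IdemOne, kron_mul_apply (α := fun s : Fin m => ZMod (q ((s : ℕ) + 1)))
    (fun s a b => if (s : ℕ) + 1 < j then (1 : ℂ)
      else if (s : ℕ) + 1 = j then (if a = b then 0 else 1)
      else if a = b then 1 else 0)
    (fun s a b => if (s : ℕ) + 1 < m - i + 1 then ((q ((s : ℕ) + 1) : ℂ))⁻¹
      else if (s : ℕ) + 1 = m - i + 1 then
        (if a = b then (1 : ℂ) else 0) - ((q ((s : ℕ) + 1) : ℂ))⁻¹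
      else if a = b then 1 else 0)]
  rw [Matrix.smul_apply, Matrix.of_apply, smul_eq_mul]
  -- `J - I` is written as a difference so that sums against it split linearly.
  have hJI : ∀ {α : Type} [DecidableEq α] (a b : α),
      (if a = b then (0 : ℂ) else 1) = 1 - if a = b then 1 else 0 := by
    intro α _ a b
    split_ifs <;> simp
  rcases lt_trichotomy (i + j) (m + 1) with h | h | h
  · rw [if_pos h, valency_cast m q hq, ← Finset.prod_mul_distrib]
    refine Finset.prod_congr rfl fun s _ => ?_
    have := q0 ((s : ℕ) + 1)
    rcases lt_trichotomy ((s : ℕ) + 1) j with hs | hs | hs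
    · have h1 : (s : ℕ) + 1 < m - i + 1 := by omega
      simp [hs, h1]
    · have h1 : (s : ℕ) + 1 < m - i + 1 := by omega
      have h2 : ¬ (s : ℕ) + 1 < j := by omega
      simp only [if_neg h2, if_pos hs, if_pos h1, hJI, sub_mul, Finset.sum_sub_distrib]
      simp
    · have h2 : ¬ (s : ℕ) + 1 < j := by omega
      have h3 : ¬ (s : ℕ) + 1 = j := by omega
      simp [h2, h3]
  · have ht : j = m - i + 1 := by omega
    rw [if_neg (by omega), if_pos h, neg_div, ← mul_neg_one, div_mul_eq_mul_div, mul_div_assoc,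
      valency_cast m q hq, ← prod_mul_ite (by omega) hj, ← Finset.prod_mul_distrib]
    refine Finset.prod_congr rfl fun s _ => ?_
    have := q0 ((s : ℕ) + 1)
    rcases lt_trichotomy ((s : ℕ) + 1) j with hs | hs | hs
    · have h3 : ¬ (s : ℕ) + 1 = j := by omega
      rw [← ht]
      simp [hs, h3]
    · have h2 : ¬ (s : ℕ) + 1 < j := by omega
      have e1 := q1 ((s : ℕ) + 1)
      have hqj : (q j : ℂ) = q ((s : ℕ) + 1) := by rw [hs]
      rw [← ht, hqj]
      simp only [if_neg h2, if_pos hs, hJI, sub_mul, mul_sub, Finset.sum_sub_distrib]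
      simp [ZMod.card]
      split_ifs <;> field_simp <;> ring
    · have h2 : ¬ (s : ℕ) + 1 < j := by omega
      have h3 : ¬ (s : ℕ) + 1 = j := by omega
      rw [← ht]
      simp [h2, h3]
  · rw [if_neg (by omega), if_neg (by omega), zero_mul]
    refine Finset.prod_eq_zero (Finset.mem_univ (⟨m - i, by omega⟩ : Fin m)) ?_
    have h1 : m - i + 1 < j := by omega
    simp [h1, Finset.sum_sub_distrib]

lemma idemOne_hadamard_adjOne (m : ℕ) (q : ℕ → ℕ) [∀ i, NeZero (q i)] (hq : ∀ i, 2 ≤ q i)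
    (i j : ℕ) (hi : i ≤ m) (hj : j ≤ m) :
    (IdemOne m q i).hadamard (AdjOne m q j) =
      ((Fintype.card (Vtx m q) : ℂ)⁻¹ *
        (if i + j < m + 1 then (multiplicity m q i : ℂ)
          else if i + j = m + 1 then
            -(multiplicity m q i : ℂ) / ((q (m - i + 1) : ℂ) - 1)
          else 0)) • AdjOne m q j := by
  have q0 : ∀ s, (q s : ℂ) ≠ 0 := fun s => NeZero.ne _
  have q1 : ∀ s, (q s : ℂ) - 1 ≠ 0 := fun s => by
    have := hq s
    rw [sub_ne_zero]
    exact_mod_cast (by omega : q s ≠ 1)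
  ext x y
  rw [Matrix.hadamard_apply, Matrix.smul_apply, smul_eq_mul, AdjOne, IdemOne, Matrix.of_apply,
    Matrix.of_apply, ← Finset.prod_mul_distrib]
  rcases lt_trichotomy (i + j) (m + 1) with h | h | h
  · rw [if_pos h, card_inv_mul_multiplicity m q hq, ← Finset.prod_mul_distrib]
    refine Finset.prod_congr rfl fun s _ => ?_
    split_ifs <;> first | omega | simp
  · have ht : m - i + 1 = j := by omega
    rw [if_neg (by omega), if_pos h, neg_div, ← mul_neg_one, div_mul_eq_mul_div, mul_div_assoc,
      ← mul_assoc, card_inv_mul_multiplicity m q hq, ht, ← prod_mul_ite (by omega) hj,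
      ← Finset.prod_mul_distrib]
    refine Finset.prod_congr rfl fun s _ => ?_
    rcases lt_trichotomy ((s : ℕ) + 1) j with hs | hs | hs
    · have h3 : ¬ (s : ℕ) + 1 = j := by omega
      simp [hs, h3]
    · have h2 : ¬ (s : ℕ) + 1 < j := by omega
      have e0 := q0 ((s : ℕ) + 1)
      have e1 := q1 ((s : ℕ) + 1)
      have hqj : (q j : ℂ) = q ((s : ℕ) + 1) := by rw [hs]
      simp only [if_neg h2, if_pos hs, hqj]
      split_ifs
      · simp
      · field_simp
        ring
    · have h2 : ¬ (s : ℕ) + 1 < j := by omega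
      have h3 : ¬ (s : ℕ) + 1 = j := by omega
      simp [h2, h3]
  · rw [if_neg (by omega), if_neg (by omega), mul_zero, zero_mul]
    refine Finset.prod_eq_zero (Finset.mem_univ (⟨j - 1, by omega⟩ : Fin m)) ?_
    have h1 : j - 1 + 1 = j := by omega
    have h2 : ¬ j < m - i + 1 := by omega
    have h3 : ¬ j = m - i + 1 := by omega
    simp only [h1, if_neg h2, if_neg h3, lt_irrefl, if_false, if_true]
    split_ifs <;> simp

/-- `A_jE_i = P_j(i)·E_i` and `E_i ∘ A_j = |X|⁻¹Q_i(j)·A_j`, where `P` and `Q`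
are the first and second eigenmatrices of `𝔛(m,1)`. -/
theorem stmt3 (m : ℕ) (hm : 1 ≤ m) (q : ℕ → ℕ) [∀ i, NeZero (q i)]
    (hq : ∀ i, 2 ≤ q i) :
    ∀ i j : ℕ, i ≤ m → j ≤ m →
      AdjOne m q j * IdemOne m q i =
        (if i + j < m + 1 then (valency m q j : ℂ)
          else if i + j = m + 1 then -(valency m q j : ℂ) / ((q j : ℂ) - 1)
          else 0) • IdemOne m q i ∧
      (IdemOne m q i).hadamard (AdjOne m q j) =
        ((Fintype.card (Vtx m q) : ℂ)⁻¹ *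
          (if i + j < m + 1 then (multiplicity m q i : ℂ)
            else if i + j = m + 1 then
              -(multiplicity m q i : ℂ) / ((q (m - i + 1) : ℂ) - 1)
            else 0)) • AdjOne m q j := by
  exact fun i j hi hj =>
    ⟨adjOne_mul_idemOne m q hq i j hi hj, idemOne_hadamard_adjOne m q hq i j hi hj⟩

end OHS

end
end

section
/- The ℂ-linear span of the matrices {E_i^*E_0E_j^* : 0 ≤ i,j ≤ m} equals the ℂ-linear span of the matrices {E_iE_0^*E_j : 0 ≤ i,j ≤ m}; that is, the standard basis and the dual standard basis span the same primary subalgebra of the Terwilliger algebra of 𝔛(m,1). -/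
/-! All matrices in question have rank at most one. Write `a_i` for the row `A_i(0,·)` and `e_i` for
the column `E_i(·,0)`. Since `E_0` is a multiple of the all-ones matrix and `E*_0` is the matrix
unit at the base point, `E*_i E_0 E*_j` is a nonzero multiple of `a_i a_jᵀ`, and
`E_i E*_0 E_j = e_i e_jᵀ`. As the outer product is bilinear, it suffices to show that the `a_i`
and the `e_i` span the same space of functions on `X` (`span_adjRow_eq_span_idemCol`).

Both families are consecutive differences of the same objects: let `B_t` be the indicator of
`{x | x_s = 0 for all s > t}`. Then `a_0 = B_0` and `a_{t+1} = B_{t+1} - B_t`, while, with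
`c_t = ∏_{s ≤ t} q_s⁻¹`, one has `e_0 = c_m B_m` and
`e_{t+1} = c_{m-t-1} B_{m-t-1} - c_{m-t} B_{m-t}`. By telescoping (`span_eq_of_differences`) and
`c_t ≠ 0`, both spans equal the span of `B_0, …, B_m`.
-/


open Matrix BigOperators

noncomputable section

namespace OHS

variable (m : ℕ) (q : ℕ → ℕ)

variable (n : ℕ)

section SpanLemmas

variable {V : Type*} [AddCommGroup V] [Module ℂ V]

/-- Telescoping: a finite sequence and its sequence of consecutive differences have the same
span. -/
theorem span_eq_of_differences {N : ℕ} {u v : ℕ → V} (h0 : u 0 = v 0)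
    (hs : ∀ t < N, u (t + 1) = v (t + 1) - v t) :
    Submodule.span ℂ (u '' Set.Iic N) = Submodule.span ℂ (v '' Set.Iic N) := by
  apply le_antisymm <;> rw [Submodule.span_le] <;> rintro _ ⟨t, ht, rfl⟩
  · rw [Set.mem_Iic] at ht
    rcases t with _ | t
    · rw [h0]
      exact Submodule.subset_span ⟨0, ht, rfl⟩
    · rw [hs t ht]
      exact Submodule.sub_mem _ (Submodule.subset_span ⟨t + 1, ht, rfl⟩)
        (Submodule.subset_span ⟨t, (Nat.le_succ t).trans ht, rfl⟩)
  · rw [Set.mem_Iic] at ht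
    induction t with
    | zero =>
      rw [← h0]
      exact Submodule.subset_span ⟨0, ht, rfl⟩
    | succ t ih =>
      have h : v (t + 1) = u (t + 1) + v t := by rw [hs t ht]; abel
      rw [h]
      exact Submodule.add_mem _ (Submodule.subset_span ⟨t + 1, ht, rfl⟩)
        (ih ((Nat.le_succ t).trans ht))

theorem span_smul_eq {N : ℕ} {u v : ℕ → V} {c : ℕ → ℂ} (hc : ∀ t ≤ N, c t ≠ 0)
    (h : ∀ t ≤ N, u t = c t • v t) :
    Submodule.span ℂ (u '' Set.Iic N) = Submodule.span ℂ (v '' Set.Iic N) := by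
  apply le_antisymm <;> rw [Submodule.span_le] <;> rintro _ ⟨t, ht, rfl⟩
  · rw [h t ht]
    exact Submodule.smul_mem _ _ (Submodule.subset_span ⟨t, ht, rfl⟩)
  · rw [← inv_smul_smul₀ (hc t ht) (v t), ← h t ht]
    exact Submodule.smul_mem _ _ (Submodule.subset_span ⟨t, ht, rfl⟩)

end SpanLemmas

/-- Products of functions that agree off one index, where the first factor is there the difference
of the other two. -/
theorem prod_eq_sub_of_eq_off {ι : Type*} [Fintype ι] [DecidableEq ι] (p : ι) {f g h : ι → ℂ}
    (hp : f p = g p - h p) (hg : ∀ i, i ≠ p → f i = g i) (hh : ∀ i, i ≠ p → f i = h i) :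
    ∏ i, f i = ∏ i, g i - ∏ i, h i := by
  rw [← Finset.mul_prod_erase _ f (Finset.mem_univ p),
    ← Finset.mul_prod_erase _ g (Finset.mem_univ p),
    ← Finset.mul_prod_erase _ h (Finset.mem_univ p),
    ← Finset.prod_congr rfl fun i hi => hg i (Finset.ne_of_mem_erase hi),
    ← Finset.prod_congr rfl fun i hi => hh i (Finset.ne_of_mem_erase hi), hp, sub_mul]

/-- The row `a_j = A_j(0,·)`, i.e. the diagonal of `E*_j`. -/
def adjRow (j : ℕ) : Vtx m q → ℂ := fun y => AdjOne m q j 0 y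

/-- The column `e_j = E_j(·,0)`. -/
def idemCol (j : ℕ) : Vtx m q → ℂ := fun x => IdemOne m q j x 0

/-- The indicator `B_t` of the vertices all of whose (1-based) coordinates beyond `t` vanish. -/
def ball (t : ℕ) : Vtx m q → ℂ := fun x =>
  ∏ i : Fin m, if (i : ℕ) + 1 ≤ t then 1 else if x i = 0 then 1 else 0

/-- The constant `c_t = ∏_{s ≤ t} q_s⁻¹`, the product being over `s ≤ m`. -/
def ballWeight (t : ℕ) : ℂ :=
  ∏ i : Fin m, if (i : ℕ) + 1 ≤ t then ((q ((i : ℕ) + 1) : ℂ))⁻¹ else 1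

theorem ballWeight_ne_zero [∀ i, NeZero (q i)] (t : ℕ) : ballWeight m q t ≠ 0 := by
  refine Finset.prod_ne_zero_iff.2 fun i _ => ?_
  split_ifs
  · exact inv_ne_zero (Nat.cast_ne_zero.2 (NeZero.ne _))
  · exact one_ne_zero

theorem ballWeight_smul_ball_apply (t : ℕ) (x : Vtx m q) :
    (ballWeight m q t • ball m q t) x = ∏ i : Fin m,
      if (i : ℕ) + 1 ≤ t then ((q ((i : ℕ) + 1) : ℂ))⁻¹ else if x i = 0 then 1 else 0 := by
  rw [Pi.smul_apply, smul_eq_mul, ballWeight, ball, ← Finset.prod_mul_distrib]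
  refine Finset.prod_congr rfl fun i _ => ?_
  split_ifs <;> simp

theorem adjRow_zero : adjRow m q 0 = ball m q 0 := by
  funext x
  simp [adjRow, ball, AdjOne, eq_comm]

theorem adjRow_succ {t : ℕ} (ht : t < m) :
    adjRow m q (t + 1) = ball m q (t + 1) - ball m q t := by
  funext x
  simp only [adjRow, ball, AdjOne, Matrix.of_apply, Pi.sub_apply, Pi.zero_apply,
    @eq_comm _ (0 : ZMod _)]
  apply prod_eq_sub_of_eq_off (⟨t, ht⟩ : Fin m)
  · by_cases h : x ⟨t, ht⟩ = 0 <;> simp [h]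
  all_goals
    intro i hi
    have : (i : ℕ) ≠ t := fun h => hi (Fin.ext h)
    split_ifs <;> first | rfl | omega

theorem idemCol_zero : idemCol m q 0 = ballWeight m q m • ball m q m := by
  funext x
  rw [ballWeight_smul_ball_apply]
  simp only [idemCol, IdemOne, Matrix.of_apply]
  refine Finset.prod_congr rfl fun i _ => ?_
  have := i.2
  rw [if_pos (by omega), if_pos (by omega)]

theorem idemCol_succ {t : ℕ} (ht : t < m) :
    idemCol m q (t + 1) = ballWeight m q (m - (t + 1)) • ball m q (m - (t + 1)) -
      ballWeight m q (m - t) • ball m q (m - t) := by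
  funext x
  rw [Pi.sub_apply, ballWeight_smul_ball_apply, ballWeight_smul_ball_apply]
  simp only [idemCol, IdemOne, Matrix.of_apply, Pi.zero_apply]
  apply prod_eq_sub_of_eq_off (⟨m - (t + 1), by omega⟩ : Fin m)
  · have h : m - (t + 1) + 1 ≤ m - t := by omega
    simp [h]
  all_goals
    intro i hi
    have : (i : ℕ) ≠ m - (t + 1) := fun h => hi (Fin.ext h)
    split_ifs <;> first | rfl | omega

theorem span_adjRow_eq_span_idemCol [∀ i, NeZero (q i)] :
    Submodule.span ℂ (adjRow m q '' Set.Iic m) = Submodule.span ℂ (idemCol m q '' Set.Iic m) := by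
  rw [span_eq_of_differences (adjRow_zero m q) fun t ht => adjRow_succ m q ht,
    span_eq_of_differences (v := fun t => ballWeight m q (m - t) • ball m q (m - t))
      (idemCol_zero m q) fun t ht => idemCol_succ m q ht,
    span_smul_eq (v := fun t => ball m q (m - t)) (fun t _ => ballWeight_ne_zero m q (m - t))
      fun t _ => rfl]
  congr 1
  ext f
  constructor <;> rintro ⟨t, ht, rfl⟩ <;> rw [Set.mem_Iic] at ht
  · exact ⟨m - t, Nat.sub_le _ _, by simp only [Nat.sub_sub_self ht]⟩
  · exact ⟨m - t, Nat.sub_le _ _, rfl⟩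

theorem dual_mul_idem_zero_mul_dual [∀ i, NeZero (q i)] (i j : ℕ) :
    DualIdemOne m q i * IdemOne m q 0 * DualIdemOne m q j =
      vecMulVec (ballWeight m q m • adjRow m q i) (adjRow m q j) := by
  ext x y
  have h : IdemOne m q 0 x y = ballWeight m q m := by
    simp only [IdemOne, ballWeight, Matrix.of_apply]
    refine Finset.prod_congr rfl fun s _ => ?_
    have := s.2
    rw [if_pos (by omega), if_pos (by omega)]
  simp only [DualIdemOne, Matrix.mul_diagonal, Matrix.diagonal_mul, h, vecMulVec_apply, adjRow,
    Pi.smul_apply, smul_eq_mul]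
  ring

theorem dualIdemOne_zero : DualIdemOne m q 0 = Matrix.diagonal (Pi.single 0 1) := by
  rw [DualIdemOne]
  congr 1
  funext y
  simp only [AdjOne, Matrix.of_apply, Nat.not_lt_zero, Nat.succ_ne_zero, if_false,
    Finset.prod_boole, Pi.single_apply, Finset.mem_univ, true_imp_iff, Pi.zero_apply]
  congr 1
  simp [funext_iff, eq_comm]

theorem idemOne_symm (j : ℕ) (x y : Vtx m q) : IdemOne m q j x y = IdemOne m q j y x := by
  simp only [IdemOne, Matrix.of_apply, @eq_comm _ (x _)]

theorem idem_mul_dual_zero_mul_idem [∀ i, NeZero (q i)] (i j : ℕ) :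
    IdemOne m q i * DualIdemOne m q 0 * IdemOne m q j =
      vecMulVec (idemCol m q i) (idemCol m q j) := by
  ext x y
  rw [dualIdemOne_zero, Matrix.mul_apply]
  simp [Matrix.mul_diagonal, Pi.single_apply, vecMulVec_apply, idemCol, idemOne_symm m q j 0 y]

/-- The span of all outer products `u_i v_jᵀ` is determined by the spans of the two families. -/
theorem span_vecMulVec {X : Type*} (N : ℕ) (u v : ℕ → X → ℂ) :
    Submodule.span ℂ {M | ∃ i ≤ N, ∃ j ≤ N, M = vecMulVec (u i) (v j)} =
      Submodule.map₂ (vecMulVecBilin ℂ ℂ)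
        (Submodule.span ℂ (u '' Set.Iic N)) (Submodule.span ℂ (v '' Set.Iic N)) := by
  rw [Submodule.map₂_span_span]
  congr 1
  ext M
  constructor
  · rintro ⟨i, hi, j, hj, rfl⟩
    exact ⟨_, ⟨i, hi, rfl⟩, _, ⟨j, hj, rfl⟩, rfl⟩
  · rintro ⟨_, ⟨i, hi, rfl⟩, _, ⟨j, hj, rfl⟩, rfl⟩
    exact ⟨i, hi, j, hj, rfl⟩

/-- The span of the standard basis `{E*_iE_0E*_j}` equals the span of the dual
standard basis `{E_iE*_0E_j}` (both span the primary subalgebra `𝒯_0`). -/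
theorem stmt6 (m : ℕ) (hm : 1 ≤ m) (q : ℕ → ℕ) [∀ i, NeZero (q i)]
    (hq : ∀ i, 2 ≤ q i) :
    Submodule.span ℂ
        {M | ∃ i ≤ m, ∃ j ≤ m,
          M = DualIdemOne m q i * IdemOne m q 0 * DualIdemOne m q j} =
      Submodule.span ℂ
        {M | ∃ i ≤ m, ∃ j ≤ m,
          M = IdemOne m q i * DualIdemOne m q 0 * IdemOne m q j} := by
  simp only [dual_mul_idem_zero_mul_dual, idem_mul_dual_zero_mul_idem]
  rw [span_vecMulVec m (fun i => ballWeight m q m • adjRow m q i), span_vecMulVec,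
    span_smul_eq (v := adjRow m q) (fun _ _ => ballWeight_ne_zero m q m) fun _ _ => rfl,
    span_adjRow_eq_span_idemCol]

end OHS

end
end

section
/- The following are equivalent: (a) F_j = E_j for all 1 ≤ j ≤ m; (b) F_j^* = E_j^* for all 1 ≤ j ≤ m; (c) m = 1 and q_1 = 2. -/
/-!
`E*_0` and `E_0` have rank one, so all `F_j` and `F*_j` have rank at most one: entrywise
`F_j(x,y) = (|X|/m_j) E_j(x,0) E_j(0,y)` (`Fmat_apply`), and `F*_j(x,y)` is a nonzero multiple of
`A_j(0,x) A_j(0,y)` (`FmatStar_apply`, `IdemOne_zero_ne`). The index `j = m` already decides the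
question.

* For `m ≥ 2` the point `x = (1,…,1)` has `E_m(x,0) = 0` (`IdemOne_top_eq_zero`), so `F_m(x,x) = 0`,
  while `E_m(x,x) ≠ 0` (`IdemOne_diag_ne`). For `m = 1` the `(1,1)` entries of `F_1` and `E_1` agree
  only if `(q_1 - 1)² = 1`.
* `E*_m` is diagonal, whereas `F*_m(x,y) ≠ 0` whenever the last coordinates of `x` and `y` are
  nonzero. Hence there is only one such point (`FmatStar_top_off_diag`), which forces `m = 1` and
  `1 = -1` in `ℤ/q_1ℤ`.

Conversely, for `m = 1` and `q_1 = 2` both identities are checked on the entries of `2 × 2` matrices.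
-/

open Matrix BigOperators

noncomputable section

namespace OHS

variable (m : ℕ) (q : ℕ → ℕ)

variable (n : ℕ)

lemma DualIdemOne_zero :
    DualIdemOne m q 0 = Matrix.diagonal fun y => if y = 0 then (1 : ℂ) else 0 := by
  unfold DualIdemOne AdjOne
  congr 1
  funext y
  simp only [Matrix.of_apply, Nat.not_lt_zero, if_false, Nat.succ_ne_zero]
  rw [Fintype.prod_ite_zero]
  simp [funext_iff, eq_comm]

/-- `E*_0` is the matrix unit at the base point, so `F_j` is the rank-one matrix built from
column `0` and row `0` of `E_j`. -/
lemma Fmat_apply [∀ i, NeZero (q i)] (j : ℕ) (x y : Vtx m q) :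
    Fmat m q j x y = (Fintype.card (Vtx m q) : ℂ) / (multiplicity m q j : ℂ) *
      (IdemOne m q j x 0 * IdemOne m q j 0 y) := by
  simp [Fmat, DualIdemOne_zero, Matrix.mul_apply, Matrix.diagonal_apply]

lemma FmatStar_apply [∀ i, NeZero (q i)] (j : ℕ) (x y : Vtx m q) :
    FmatStar m q j x y = (Fintype.card (Vtx m q) : ℂ) / (valency m q j : ℂ) *
      (AdjOne m q j 0 x * IdemOne m q 0 x y * AdjOne m q j 0 y) := by
  simp [FmatStar, DualIdemOne]

lemma IdemOne_zero_ne [∀ i, NeZero (q i)] (x y : Vtx m q) : IdemOne m q 0 x y ≠ 0 := by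
  simp only [IdemOne, Matrix.of_apply]
  refine Finset.prod_ne_zero_iff.2 fun i _ => ?_
  rw [if_pos (by omega)]
  exact inv_ne_zero (Nat.cast_ne_zero.2 (NeZero.ne _))

lemma IdemOne_diag_ne [∀ i, NeZero (q i)] (hq : ∀ i, 2 ≤ q i) (j : ℕ) (x : Vtx m q) :
    IdemOne m q j x x ≠ 0 := by
  simp only [IdemOne, Matrix.of_apply]
  refine Finset.prod_ne_zero_iff.2 fun i _ => ?_
  have h := hq ((i : ℕ) + 1)
  have h0 : (q ((i : ℕ) + 1) : ℂ) ≠ 0 := Nat.cast_ne_zero.2 (NeZero.ne _)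
  have h1 : (q ((i : ℕ) + 1) : ℂ) ≠ 1 := by exact_mod_cast (by omega)
  split_ifs
  · exact inv_ne_zero h0
  · rw [sub_ne_zero]
    exact fun e => h1 (inv_eq_one.1 e.symm)
  · exact one_ne_zero

lemma valency_ne_zero (hq : ∀ i, 2 ≤ q i) (j : ℕ) : valency m q j ≠ 0 := by
  refine Finset.prod_ne_zero_iff.2 fun i _ => ?_
  have h := hq ((i : ℕ) + 1)
  split_ifs <;> omega

/-- Points whose last coordinate is nonzero lie in the `m`-th subconstituent with respect
to the base point `0`. -/
lemma AdjOne_top_ne (l : Fin m) (hl : (l : ℕ) + 1 = m) (y : Vtx m q) (hy : y l ≠ 0) :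
    AdjOne m q m 0 y ≠ 0 := by
  simp only [AdjOne, Matrix.of_apply]
  refine Finset.prod_ne_zero_iff.2 fun i _ => ?_
  split_ifs with h1 h2 h3
  · exact one_ne_zero
  · obtain rfl : i = l := Fin.ext (by omega)
    exact absurd h3.symm hy
  · exact one_ne_zero
  · omega
  · omega

lemma zmod_one_ne (hq : ∀ i, 2 ≤ q i) (i : ℕ) : (1 : ZMod (q i)) ≠ 0 := by
  have : Fact (1 < q i) := ⟨hq i⟩
  exact one_ne_zero

/-- The rank-one matrix `F*_m` has nonzero entries at all pairs of points of the `m`-th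
subconstituent, so it can be diagonal only if that subconstituent is a singleton. -/
lemma FmatStar_top_off_diag [∀ i, NeZero (q i)] (hq : ∀ i, 2 ≤ q i)
    (h : FmatStar m q m = DualIdemOne m q m) (l : Fin m) (hl : (l : ℕ) + 1 = m)
    (x y : Vtx m q) (hx : x l ≠ 0) (hy : y l ≠ 0) : x = y := by
  by_contra hxy
  have e := congrFun (congrFun h x) y
  rw [FmatStar_apply, DualIdemOne, Matrix.diagonal_apply_ne _ hxy] at e
  have hv : (valency m q m : ℂ) ≠ 0 := Nat.cast_ne_zero.2 (valency_ne_zero m q hq m)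
  have hc : (Fintype.card (Vtx m q) : ℂ) ≠ 0 := Nat.cast_ne_zero.2 Fintype.card_ne_zero
  exact mul_ne_zero (div_ne_zero hc hv)
    (mul_ne_zero (mul_ne_zero (AdjOne_top_ne m q l hl x hx) (IdemOne_zero_ne m q x y))
      (AdjOne_top_ne m q l hl y hy)) e

/-- If `x` differs from `0` in a coordinate after the first, then `E_m(x,0) = 0`. -/
lemma IdemOne_top_eq_zero (i : Fin m) (hi : (i : ℕ) ≠ 0) (x : Vtx m q) (hx : x i ≠ 0) :
    IdemOne m q m x 0 = 0 := by
  simp only [IdemOne, Matrix.of_apply]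
  refine Finset.prod_eq_zero (Finset.mem_univ i) ?_
  rw [if_neg (by omega), if_neg (by omega), if_neg (by simpa using hx)]

lemma IdemOne_one_one (x y : Vtx 1 q) :
    IdemOne 1 q 1 x y = (if x 0 = y 0 then (1 : ℂ) else 0) - ((q 1 : ℂ))⁻¹ := by
  simp [IdemOne]

lemma IdemOne_one_zero (x y : Vtx 1 q) : IdemOne 1 q 0 x y = ((q 1 : ℂ))⁻¹ := by
  simp [IdemOne]

lemma AdjOne_one_one (x y : Vtx 1 q) :
    AdjOne 1 q 1 x y = if x 0 = y 0 then (0 : ℂ) else 1 := by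
  simp [AdjOne]

lemma card_Vtx_one [∀ i, NeZero (q i)] : Fintype.card (Vtx 1 q) = q 1 := by
  simp [Vtx, ZMod.card]

lemma multiplicity_one_one : multiplicity 1 q 1 = q 1 - 1 := by
  simp [multiplicity]

lemma valency_one_one : valency 1 q 1 = q 1 - 1 := by
  simp [valency]

/-- In `ℤ/2ℤ` an element is determined by whether it vanishes. -/
lemma zmod_two_eq_iff {k : ℕ} (hk : k = 2) (a b : ZMod k) : a = b ↔ (a = 0 ↔ b = 0) := by
  subst hk
  revert a b
  decide

lemma Fmat_eq_of_two [∀ i, NeZero (q i)] (h2 : q 1 = 2) : Fmat 1 q 1 = IdemOne 1 q 1 := by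
  ext x y
  rw [Fmat_apply, card_Vtx_one, multiplicity_one_one]
  simp only [IdemOne_one_one, Pi.zero_apply,
    zmod_two_eq_iff (k := q (((0 : Fin 1) : ℕ) + 1)) h2 (x 0) (y 0),
    eq_comm (a := (0 : ZMod (q (((0 : Fin 1) : ℕ) + 1)))), h2]
  by_cases hx : x 0 = 0 <;> by_cases hy : y 0 = 0 <;> simp [hx, hy] <;> norm_num

lemma FmatStar_eq_of_two [∀ i, NeZero (q i)] (h2 : q 1 = 2) : FmatStar 1 q 1 = DualIdemOne 1 q 1 := by
  ext x y
  have hxy : x = y ↔ (x 0 = 0 ↔ y 0 = 0) := by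
    rw [← zmod_two_eq_iff (k := q (((0 : Fin 1) : ℕ) + 1)) h2 (x 0) (y 0)]
    exact ⟨fun h => h ▸ rfl, fun h => funext fun i => by
      obtain rfl : i = 0 := Subsingleton.elim _ _
      exact h⟩
  rw [FmatStar_apply, card_Vtx_one, valency_one_one, DualIdemOne, Matrix.diagonal_apply]
  simp only [IdemOne_one_zero, AdjOne_one_one, Pi.zero_apply, hxy,
    eq_comm (a := (0 : ZMod (q (((0 : Fin 1) : ℕ) + 1)))), h2]
  by_cases hx : x 0 = 0 <;> by_cases hy : y 0 = 0 <;> simp [hx, hy]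

/-- The following are equivalent: `F_j = E_j` for all `1 ≤ j ≤ m`;
`F*_j = E*_j` for all `1 ≤ j ≤ m`; `m = 1` and `q_1 = 2`. -/
theorem stmt7 (m : ℕ) (hm : 1 ≤ m) (q : ℕ → ℕ) [∀ i, NeZero (q i)]
    (hq : ∀ i, 2 ≤ q i) :
    ((∀ j : ℕ, 1 ≤ j → j ≤ m → Fmat m q j = IdemOne m q j) ↔ (m = 1 ∧ q 1 = 2)) ∧
    ((∀ j : ℕ, 1 ≤ j → j ≤ m → FmatStar m q j = DualIdemOne m q j) ↔
      (m = 1 ∧ q 1 = 2)) := by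
  have of_one : ∀ (P : ℕ → Prop), m = 1 → P 1 → ∀ j, 1 ≤ j → j ≤ m → P j := by
    intro P h1 hP j hj hjm
    obtain rfl : j = 1 := by omega
    exact hP
  refine ⟨⟨fun h => ?_, ?_⟩, ⟨fun h => ?_, ?_⟩⟩
  · have hm' := h m hm le_rfl
    -- For `m ≥ 2` the point `(1,…,1)` differs from `0` after the first coordinate, so the
    -- corresponding diagonal entry of `F_m` vanishes.
    obtain rfl : m = 1 := by
      by_contra hne
      have hx : (1 : Vtx m q) ⟨m - 1, by omega⟩ ≠ 0 := zmod_one_ne q hq _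
      have e := congrFun (congrFun hm' 1) 1
      rw [Fmat_apply, IdemOne_top_eq_zero m q ⟨m - 1, by omega⟩ (by simp; omega) 1 hx] at e
      exact IdemOne_diag_ne m q hq m 1 (by rw [← e]; simp)
    refine ⟨rfl, ?_⟩
    -- Comparing `(1,1)` entries gives `(q_1 - 1)² = 1`.
    have e := congrFun (congrFun hm' 1) 1
    have h1 : (1 : Vtx 1 q) 0 ≠ (0 : Vtx 1 q) 0 := zmod_one_ne q hq _
    rw [Fmat_apply, card_Vtx_one, multiplicity_one_one] at e
    simp only [IdemOne_one_one, if_neg h1, if_neg h1.symm, if_true] at e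
    have hq1 := hq 1
    obtain ⟨k, hk⟩ : ∃ k, q 1 = k + 2 := ⟨q 1 - 2, by omega⟩
    have ha : (k : ℂ) + 2 ≠ 0 := by exact_mod_cast (by omega : k + 2 ≠ 0)
    have hb : (k : ℂ) + 1 ≠ 0 := by exact_mod_cast (by omega : k + 1 ≠ 0)
    rw [hk, show k + 2 - 1 = k + 1 by omega] at e
    push_cast at e
    field_simp at e
    have e' : 1 = (k + 1) * (k + 2 - 1 : ℂ) := by linear_combination e
    have e'' : k * (k + 2) = 0 := by
      have : (k : ℂ) * (k + 2) = 0 := by linear_combination -e'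
      exact_mod_cast this
    have : k = 0 := by simpa using e''
    omega
  · rintro ⟨rfl, h2⟩
    exact of_one _ rfl (Fmat_eq_of_two q h2)
  · have hs := FmatStar_top_off_diag m q hq (h m hm le_rfl) ⟨m - 1, by omega⟩
      (by simp; omega)
    have hone : ∀ i, (1 : ZMod (q i)) ≠ 0 := zmod_one_ne q hq
    -- The points `(1,…,1)` and `(0,1,…,1)` both lie in the `m`-th subconstituent if `m ≥ 2`.
    obtain rfl : m = 1 := by
      by_contra hne
      have e := hs 1 (Function.update 1 ⟨0, by omega⟩ 0) (hone _) (by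
        rw [Function.update_of_ne (by simp [Fin.ext_iff]; omega)]
        exact hone _)
      exact hone _ (by simpa using congrFun e ⟨0, by omega⟩)
    refine ⟨rfl, ?_⟩
    -- The points `1` and `-1` both lie in it if `m = 1`, so they coincide.
    have e := congrFun (hs 1 (-1) (hone _) (neg_ne_zero.2 (hone _))) 0
    have e2 : ((2 : ℕ) : ZMod (q 1)) = 0 := by
      have e' : (1 : ZMod (q 1)) = -1 := e
      push_cast
      linear_combination e'
    exact le_antisymm (Nat.le_of_dvd (by norm_num) ((ZMod.natCast_eq_zero_iff _ _).1 e2)) (hq 1)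
  · rintro ⟨rfl, h2⟩
    exact of_one _ rfl (FmatStar_eq_of_two q h2)

end OHS

end
end

section
/- Assume m ≥ 2 or q_1 ≥ 3. The non-unital ℂ-subalgebra of Mat_X(ℂ) generated by {G_1,…,G_m} ∪ {G_1^*,…,G_m^*} is commutative, and the matrices {G_jG_i^* : (i,j) ∈ Λ(m)} form a ℂ-basis of it; in particular this subalgebra has dimension |Λ(m)|. -/
/-!
Write `k = m + 1 - j`, let `J` be the normalised all-ones matrix of one coordinate and `e` the
matrix unit at `0` of one coordinate of size `n`. They satisfy `eJe = e/n` and `JeJ = J/n`, so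

  `R = 1 - J - n/(n-1) (1-J)e(1-J) = 1 - e - n/(n-1) (1-e)J(1-e)`

(`locCore_comm`), and this idempotent is annihilated by `J` and by `e` on both sides. All of
`E_j`, `F_j`, `E*_i`, `F*_i` are Kronecker products of such local matrices: `E_j` is
`J ⊗ ⋯ ⊗ J ⊗ (1-J) ⊗ 1 ⊗ ⋯ ⊗ 1`, and `F_j` is `J ⊗ ⋯ ⊗ J ⊗ (1-J-R) ⊗ e ⊗ ⋯ ⊗ e`, with the
exceptional factor at position `k`; dually `E*_i` is `1 ⊗ ⋯ ⊗ 1 ⊗ (1-e) ⊗ e ⊗ ⋯ ⊗ e`, and `F*_i`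
is `J ⊗ ⋯ ⊗ J ⊗ (1-e-R) ⊗ e ⊗ ⋯ ⊗ e`, with the exceptional factor at position `i`.

Let `H_{k,k} = J ⊗ ⋯ ⊗ J ⊗ R ⊗ e ⊗ ⋯ ⊗ e`, and for `k < i` let
`H_{k,i} = J ⊗ ⋯ ⊗ J ⊗ (1-J) ⊗ 1 ⊗ ⋯ ⊗ 1 ⊗ (1-e) ⊗ e ⊗ ⋯ ⊗ e`, with exceptional factors at `k`
and `i`. These are pairwise orthogonal idempotents (`Hm_mul`), and `H_{k,i}` vanishes only for
`k = i` and `q_i = 2` (`Hm_ne_zero`, `Hm_eq_zero`). Telescoping along the coordinates gives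
`G_j = ∑_{i ≥ k} H_{k,i}` and `G*_i = ∑_{k ≤ i} H_{k,i}` (`Gmat_eq`, `GmatStar_eq`), whence
`G_j G*_i = H_{k,i}`, to be read as `0` for `i < k` (`Gmat_mul_GmatStar`). So the `G_j G*_i` with
`(i,j) ∈ Λ(m)` are nonzero orthogonal idempotents whose span is a commutative algebra containing
the generators.
-/

open Matrix BigOperators

noncomputable section

namespace OHS

variable (m : ℕ) (q : ℕ → ℕ)

variable (n : ℕ)

/-! ### Local algebra on one coordinate -/

/-- The matrix `c·(1−J)e(1−J)`, with `c = n/(n−1)` for `n×n` matrices, is the local factor of `F_j`; it is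
symmetric in `J` and `e` up to a correction, see `locCore_comm`. This is what remains of the
identity after subtracting `J` and that factor. -/
def locCore {A : Type*} [Ring A] [Algebra ℂ A] (c : ℂ) (J e : A) : A :=
  1 - J - c • ((1 - J) * e * (1 - J))

section LocCore

variable {A : Type*} [Ring A] [Algebra ℂ A] {c t : ℂ} {J e : A}

/-- The symmetry of `locCore` in `J` and `e`; it makes one matrix serve both the `G_j` and
the `G*_i`. -/
lemma locCore_comm (hc : c * (1 - t) = 1) (h1 : e * J * e = t • e) (h2 : J * e * J = t • J) :
    locCore c J e = locCore c e J := by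
  have e1 : (1 - J) * e * (1 - J) = e - e * J - J * e + t • J := by
    rw [← h2]; noncomm_ring
  have e2 : (1 - e) * J * (1 - e) = J - J * e - e * J + t • e := by
    rw [← h1]; noncomm_ring
  have hs : ∀ x : A, c • t • x = c • x - x := fun x => by
    have : c * t = c - 1 := by linear_combination -hc
    rw [smul_smul, this, sub_smul, one_smul]
  simp only [locCore, e1, e2, smul_add, smul_sub, hs]
  abel

lemma locCore_mul_left (hJ : J * J = J) : J * locCore c J e = 0 := by
  have : J * (1 - J) = 0 := by rw [mul_sub, hJ, mul_one, sub_self]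
  rw [locCore, mul_sub, mul_smul_comm, ← mul_assoc, ← mul_assoc, this]
  simp

lemma locCore_mul_right (hJ : J * J = J) : locCore c J e * J = 0 := by
  have : (1 - J) * J = 0 := by rw [sub_mul, hJ, one_mul, sub_self]
  rw [locCore, sub_mul, smul_mul_assoc, mul_assoc, this]
  simp

lemma locCore_idem (hJ : J * J = J) (he : e * e = e) (hc : c * (1 - t) = 1)
    (h1 : e * J * e = t • e) (h2 : J * e * J = t • J) :
    locCore c J e * locCore c J e = locCore c J e := by
  have a1 : locCore c J e * J = 0 := locCore_mul_right hJ
  have a2 : locCore c J e * e = 0 := by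
    rw [locCore_comm hc h1 h2]; exact locCore_mul_right he
  have a3 : locCore c J e * (1 - J) = locCore c J e := by rw [mul_sub, a1, mul_one, sub_zero]
  conv_lhs => rw [show locCore c J e * locCore c J e
    = locCore c J e * (1 - J - c • ((1 - J) * e * (1 - J))) from rfl]
  rw [mul_sub, a3, mul_smul_comm, ← mul_assoc, ← mul_assoc, a3, a2]
  simp

end LocCore

/-- The normalised all-ones matrix `J̃` of size `n`. -/
def locJ (n : ℕ) : Matrix (ZMod n) (ZMod n) ℂ := Matrix.of fun _ _ => (n : ℂ)⁻¹

/-- The diagonal matrix unit at `0`. -/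
def locE (n : ℕ) : Matrix (ZMod n) (ZMod n) ℂ :=
  Matrix.of fun x y => if x = 0 ∧ y = 0 then 1 else 0

/-- The local core on `ZMod n`: the projection onto the vectors supported off `0` with
zero sum. -/
def locR (n : ℕ) [NeZero n] : Matrix (ZMod n) (ZMod n) ℂ :=
  locCore ((n : ℂ) / ((n : ℂ) - 1)) (locJ n) (locE n)

section Loc

variable (n : ℕ) [NeZero n]

lemma locJ_idem : locJ n * locJ n = locJ n := by
  have : (n : ℂ) ≠ 0 := NeZero.ne _
  ext x y
  simp [locJ, Matrix.mul_apply, ZMod.card, this]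

lemma locE_idem : locE n * locE n = locE n := by
  ext x y
  by_cases hx : x = 0 <;> by_cases hy : y = 0 <;> simp [locE, Matrix.mul_apply, hx, hy]

lemma locE_J_E : locE n * locJ n * locE n = (n : ℂ)⁻¹ • locE n := by
  ext x y
  by_cases hx : x = 0 <;> by_cases hy : y = 0 <;> simp [locE, locJ, Matrix.mul_apply, hx, hy]

lemma locJ_E_J : locJ n * locE n * locJ n = (n : ℂ)⁻¹ • locJ n := by
  ext x y
  simp [locE, locJ, Matrix.mul_apply, ite_and]

lemma loc_const (hn : 2 ≤ n) : (n : ℂ) / ((n : ℂ) - 1) * (1 - (n : ℂ)⁻¹) = 1 := by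
  have h0 : (n : ℂ) ≠ 0 := NeZero.ne _
  have h1 : (n : ℂ) - 1 ≠ 0 := by
    rw [sub_ne_zero]; exact_mod_cast (by omega : n ≠ 1)
  field_simp

lemma locR_symm (hn : 2 ≤ n) :
    locR n = locCore ((n : ℂ) / ((n : ℂ) - 1)) (locE n) (locJ n) :=
  locCore_comm (loc_const n hn) (locE_J_E n) (locJ_E_J n)

lemma locR_idem (hn : 2 ≤ n) : locR n * locR n = locR n :=
  locCore_idem (locJ_idem n) (locE_idem n) (loc_const n hn) (locE_J_E n) (locJ_E_J n)

lemma locJ_mul_R : locJ n * locR n = 0 := locCore_mul_left (locJ_idem n)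

lemma locR_mul_J : locR n * locJ n = 0 := locCore_mul_right (locJ_idem n)

lemma locE_mul_R (hn : 2 ≤ n) : locE n * locR n = 0 := by
  rw [locR_symm n hn]; exact locCore_mul_left (locE_idem n)

lemma locR_mul_E (hn : 2 ≤ n) : locR n * locE n = 0 := by
  rw [locR_symm n hn]; exact locCore_mul_right (locE_idem n)

lemma trace_locJ : (locJ n).trace = 1 := by
  have h0 : (n : ℂ) ≠ 0 := NeZero.ne _
  simp [Matrix.trace, locJ, ZMod.card, h0]

lemma trace_locE : (locE n).trace = 1 := by
  simp [Matrix.trace, locE]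

lemma trace_one_loc : (1 : Matrix (ZMod n) (ZMod n) ℂ).trace = n := by
  simp [Matrix.trace_one, ZMod.card]

lemma locR_apply (hn : 2 ≤ n) (x y : ZMod n) :
    locR n x y = if x = 0 ∨ y = 0 then 0 else (if x = y then 1 else 0) - ((n : ℂ) - 1)⁻¹ := by
  have h0 : (n : ℂ) ≠ 0 := NeZero.ne _
  have h1 : (n : ℂ) - 1 ≠ 0 := by
    rw [sub_ne_zero]; exact_mod_cast (by omega : n ≠ 1)
  have e2 : (1 - locE n) * locJ n * (1 - locE n)
      = locJ n - locJ n * locE n - locE n * locJ n + locE n * locJ n * locE n := by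
    noncomm_ring
  rw [locR_symm n hn, locCore, e2, locE_J_E]
  simp only [Matrix.sub_apply, Matrix.smul_apply, Matrix.add_apply, Matrix.mul_apply, locE, locJ,
    Matrix.of_apply, Matrix.one_apply]
  by_cases hx : x = 0 <;> by_cases hy : y = 0 <;> simp [hx, hy]
  · exact Ne.symm hy
  · field_simp

/-- On two points a vector supported off `0` with zero sum vanishes. -/
lemma locR_two : locR 2 = 0 := by
  ext x y
  rw [locR_apply 2 le_rfl]
  have h : ∀ x y : ZMod 2, (x = 0 ∨ y = 0) ∨ x = y := by decide
  by_cases h0 : x = 0 ∨ y = 0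
  · rw [if_pos h0]; rfl
  · rw [if_neg h0, if_pos ((h x y).resolve_left h0)]; norm_num

lemma locR_ne_zero (hn : 3 ≤ n) : locR n ≠ 0 := by
  intro h
  have := locR_apply n (by omega) 1 1
  rw [h] at this
  have hf : Fact (1 < n) := ⟨by omega⟩
  have h1 : (n : ℂ) - 1 ≠ 0 := by
    rw [sub_ne_zero]; exact_mod_cast (by omega : n ≠ 1)
  simp only [Matrix.zero_apply, one_ne_zero, or_self, if_false, if_true] at this
  have h3 : (n : ℂ) = 2 := by field_simp at this; linear_combination -this
  have : n = 2 := by exact_mod_cast h3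
  omega

lemma locJ_ne_zero : locJ n ≠ 0 := fun h => by simpa [h] using trace_locJ n

lemma locE_ne_zero : locE n ≠ 0 := fun h => by simpa [h] using trace_locE n

lemma one_sub_locJ_ne_zero (hn : 2 ≤ n) : 1 - locJ n ≠ 0 := fun h => by
  have := congrArg Matrix.trace h
  rw [Matrix.trace_sub, trace_locJ, trace_one_loc, Matrix.trace_zero, sub_eq_zero] at this
  have : n = 1 := by exact_mod_cast this
  omega

lemma one_sub_locE_ne_zero (hn : 2 ≤ n) : 1 - locE n ≠ 0 := fun h => by
  have := congrArg Matrix.trace h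
  rw [Matrix.trace_sub, trace_locE, trace_one_loc, Matrix.trace_zero, sub_eq_zero] at this
  have : n = 1 := by exact_mod_cast this
  omega

lemma one_loc_ne_zero : (1 : Matrix (ZMod n) (ZMod n) ℂ) ≠ 0 := one_ne_zero

end Loc

/-! ### Kronecker products over the coordinates -/

/-- The Kronecker product `M_1⊗⋯⊗M_m` over the coordinates of `X`; the factor at `s : Fin m`
sits at the 1-based position `s + 1`. -/
def tens (m : ℕ) (q : ℕ → ℕ)
    (M : (s : Fin m) → Matrix (ZMod (q ((s : ℕ) + 1))) (ZMod (q ((s : ℕ) + 1))) ℂ) :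
    Matrix (Vtx m q) (Vtx m q) ℂ :=
  Matrix.of fun x y => ∏ s, M s (x s) (y s)

section Tens

variable {m : ℕ} {q : ℕ → ℕ}
  {M N L : (s : Fin m) → Matrix (ZMod (q ((s : ℕ) + 1))) (ZMod (q ((s : ℕ) + 1))) ℂ}

lemma tens_mul [∀ i, NeZero (q i)] (M N) :
    tens m q M * tens m q N = tens m q fun s => M s * N s := by
  ext x y
  simp only [tens, Matrix.mul_apply, Matrix.of_apply, ← Finset.prod_mul_distrib]
  rw [Finset.prod_univ_sum]
  simp

lemma tens_smul (c : Fin m → ℂ) (M) :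
    (tens m q fun s => c s • M s) = (∏ s, c s) • tens m q M := by
  ext x y
  simp [tens, Finset.prod_mul_distrib]

lemma tens_eq_zero (s : Fin m) (h : M s = 0) : tens m q M = 0 := by
  ext x y
  exact Finset.prod_eq_zero (Finset.mem_univ s) (by simp [h])

lemma tens_ne_zero (h : ∀ s, M s ≠ 0) : tens m q M ≠ 0 := by
  intro h0
  have h' : ∀ s, ∃ x y, M s x y ≠ 0 := fun s => by
    by_contra! hc
    exact h s (by ext x y; exact hc x y)
  choose x y hxy using h'
  have : ∏ s, M s (x s) (y s) = 0 := congrFun (congrFun h0 x) y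
  exact Finset.prod_ne_zero_iff.2 (fun s _ => hxy s) this

/-- Additivity of the Kronecker product in the factor at `p`. -/
lemma tens_add (p : Fin m) (hp : M p + N p = L p) (h1 : ∀ s, s ≠ p → M s = L s)
    (h2 : ∀ s, s ≠ p → N s = L s) : tens m q M + tens m q N = tens m q L := by
  ext x y
  refine Finset.prod_add_prod_eq (Finset.mem_univ p) ?_ ?_ ?_
  · rw [← hp]; rfl
  · intro s _ hs; rw [h1 s hs]
  · intro s _ hs; rw [h2 s hs]

lemma IdemOne_eq_s10 (j : ℕ) : IdemOne m q j = tens m q fun s =>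
    if (s : ℕ) + 1 < m - j + 1 then locJ _ else if (s : ℕ) + 1 = m - j + 1 then 1 - locJ _
    else 1 := by
  ext x y
  simp only [IdemOne, tens, Matrix.of_apply]
  refine Finset.prod_congr rfl fun s _ => ?_
  split_ifs <;> simp_all [locJ, Matrix.one_apply]

lemma DualIdemOne_eq (j : ℕ) : DualIdemOne m q j = tens m q fun s =>
    if (s : ℕ) + 1 < j then 1 else if (s : ℕ) + 1 = j then 1 - locE _ else locE _ := by
  ext x y
  simp only [DualIdemOne, tens, Matrix.of_apply, Matrix.diagonal_apply, AdjOne]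
  split_ifs with h
  · subst h
    refine Finset.prod_congr rfl fun s _ => ?_
    split_ifs <;> simp_all [locE, eq_comm]
  · obtain ⟨s, hs⟩ := Function.ne_iff.1 h
    refine (Finset.prod_eq_zero (Finset.mem_univ s) ?_).symm
    have hs' : ¬ (x s = 0 ∧ y s = 0) := fun h => hs (h.1.trans h.2.symm)
    split_ifs <;> simp [locE, hs, hs']

end Tens

/-! ### The orthogonal idempotents `H_{k,i}` -/

/-- Local factor at position `a` (for a coordinate of size `n`) of `H_{k,i}`, where `k ≤ i`. -/
def Hfac (k i a n : ℕ) [NeZero n] : Matrix (ZMod n) (ZMod n) ℂ :=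
  if a < k then locJ n
  else if i < a then locE n
  else if k = i then locR n
  else if a = k then 1 - locJ n
  else if a = i then 1 - locE n
  else 1

/-- `H_{k,i}`: for `k < i` it is
`J̃^{⊗(k−1)}⊗(1−J̃)⊗1^{⊗(i−k−1)}⊗(1−e)⊗e^{⊗(m−i)}` with `e` the matrix unit at `0`, for `k = i`
it is `J̃^{⊗(i−1)}⊗R⊗e^{⊗(m−i)}`, and `0` for `k > i`. It will turn out to be
`G_{m+1−k} G*_i`. -/
def Hm (m : ℕ) (q : ℕ → ℕ) [∀ i, NeZero (q i)] (k i : ℕ) : Matrix (Vtx m q) (Vtx m q) ℂ :=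
  if k ≤ i then tens m q fun s => Hfac k i ((s : ℕ) + 1) (q ((s : ℕ) + 1)) else 0

/-- Terms telescoping `Σ_i H_{k,i}`, as `H_{k,i}` is the difference at `i` and `i − 1` when `k < i`:
`J̃` before position `k`, `1−J̃` at `k`, then `1` up to position `i`, then `e`. -/
def telE (m : ℕ) (q : ℕ → ℕ) [∀ i, NeZero (q i)] (k i : ℕ) : Matrix (Vtx m q) (Vtx m q) ℂ :=
  tens m q fun s =>
    if (s : ℕ) + 1 < k then locJ _ else if (s : ℕ) + 1 = k then 1 - locJ _
    else if (s : ℕ) + 1 ≤ i then 1 else locE _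

/-- Terms telescoping `Σ_k H_{k,i}`, as `H_{k,i}` is the difference at `k` and `k + 1` when `k < i`:
`J̃` before position `k`, then `1`, with `1−e` at position `i` and `e` after it. -/
def telD (m : ℕ) (q : ℕ → ℕ) [∀ i, NeZero (q i)] (i k : ℕ) : Matrix (Vtx m q) (Vtx m q) ℂ :=
  tens m q fun s =>
    if i < (s : ℕ) + 1 then locE _ else if (s : ℕ) + 1 = i then 1 - locE _
    else if (s : ℕ) + 1 < k then locJ _ else 1

section H

variable {m : ℕ} {q : ℕ → ℕ} [∀ i, NeZero (q i)]

lemma Hfac_idem (k i a n : ℕ) [NeZero n] (hn : 2 ≤ n) :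
    Hfac k i a n * Hfac k i a n = Hfac k i a n := by
  unfold Hfac
  split_ifs
  · exact locJ_idem n
  · exact locE_idem n
  · exact locR_idem n hn
  · exact IsIdempotentElem.one_sub (locJ_idem n)
  · exact IsIdempotentElem.one_sub (locE_idem n)
  · simp

lemma Hfac_at_left {k i n : ℕ} [NeZero n] (hki : k ≤ i) :
    locJ n * Hfac k i k n = 0 ∧ Hfac k i k n * locJ n = 0 := by
  unfold Hfac
  rw [if_neg (lt_irrefl _), if_neg (not_lt.2 hki)]
  split_ifs
  · exact ⟨locJ_mul_R n, locR_mul_J n⟩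
  · simp [mul_sub, sub_mul, locJ_idem]
  · exact absurd rfl ‹¬k = k›

lemma Hfac_at_right {k i n : ℕ} [NeZero n] (hn : 2 ≤ n) (hki : k ≤ i) :
    locE n * Hfac k i i n = 0 ∧ Hfac k i i n * locE n = 0 := by
  unfold Hfac
  rw [if_neg (not_lt.2 hki), if_neg (lt_irrefl _)]
  split_ifs with h1 h2
  · exact ⟨locE_mul_R n hn, locR_mul_E n hn⟩
  · exact absurd h2.symm h1
  · simp [mul_sub, sub_mul, locE_idem]
  · exact absurd rfl ‹¬i = i›

/-- Distinct `H`'s are separated at a single coordinate, where a factor `J̃` (or `e`) meets a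
factor annihilated by it. -/
lemma Hm_mul (hq : ∀ i, 2 ≤ q i) {k i k' i' : ℕ} (hk : k ∈ Finset.Icc 1 m)
    (hi : i ∈ Finset.Icc 1 m) (hk' : k' ∈ Finset.Icc 1 m) (hi' : i' ∈ Finset.Icc 1 m) :
    Hm m q k i * Hm m q k' i' = if k = k' ∧ i = i' then Hm m q k i else 0 := by
  rw [Finset.mem_Icc] at hk hi hk' hi'
  unfold Hm
  by_cases h : k ≤ i
  swap
  · simp [h]
  by_cases h' : k' ≤ i'
  swap
  · rw [if_neg h', mul_zero, if_neg]
    rintro ⟨rfl, rfl⟩; exact h' h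
  rw [if_pos h, if_pos h', tens_mul]
  have hJ : ∀ {a k i n : ℕ} [NeZero n], a < k → Hfac k i a n = locJ n := fun h => if_pos h
  have hE : ∀ {a k i n : ℕ} [NeZero n], k ≤ i → i < a → Hfac k i a n = locE n := fun h1 h2 => by
    unfold Hfac; rw [if_neg (by omega), if_pos h2]
  have pos : ∀ a, 1 ≤ a → a ≤ m → ∃ s : Fin m, (s : ℕ) + 1 = a :=
    fun a h1 h2 => ⟨⟨a - 1, by omega⟩, by simp; omega⟩
  rcases lt_trichotomy k k' with hlt | rfl | hlt
  · rw [if_neg (by omega)]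
    obtain ⟨s, rfl⟩ := pos k hk.1 hk.2
    refine tens_eq_zero s ?_
    rw [hJ hlt]
    exact (Hfac_at_left h).2
  · rcases lt_trichotomy i i' with hlt | rfl | hlt
    · rw [if_neg (by omega)]
      obtain ⟨s, rfl⟩ := pos i' hi'.1 hi'.2
      refine tens_eq_zero s ?_
      rw [hE h hlt]
      exact (Hfac_at_right (hq _) h').1
    · simp [Hfac_idem _ _ _ _ (hq _)]
    · rw [if_neg (by omega)]
      obtain ⟨s, rfl⟩ := pos i hi.1 hi.2
      refine tens_eq_zero s ?_
      rw [hE h' hlt]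
      exact (Hfac_at_right (hq _) h).2
  · rw [if_neg (by omega)]
    obtain ⟨s, rfl⟩ := pos k' hk'.1 hk'.2
    refine tens_eq_zero s ?_
    rw [hJ hlt]
    exact (Hfac_at_left h').1

lemma Hm_ne_zero (hq : ∀ i, 2 ≤ q i) {k i : ℕ} (h : k < i ∨ k = i ∧ 3 ≤ q i) :
    Hm m q k i ≠ 0 := by
  unfold Hm
  rw [if_pos (by omega)]
  refine tens_ne_zero fun s => ?_
  unfold Hfac
  split_ifs with h1 h2 h3
  · exact locJ_ne_zero _
  · exact locE_ne_zero _
  · have : (s : ℕ) + 1 = i := by omega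
    exact locR_ne_zero _ (by rw [this]; omega)
  · exact one_sub_locJ_ne_zero _ (hq _)
  · exact one_sub_locE_ne_zero _ (hq _)
  · exact one_loc_ne_zero _

lemma locR_eq_zero {n : ℕ} [NeZero n] (hn : n = 2) : locR n = 0 := by
  subst hn; exact locR_two

lemma Hm_eq_zero (hq : ∀ i, 2 ≤ q i) {k i : ℕ} (hk : k ∈ Finset.Icc 1 m)
    (h : ¬ (k < i ∨ k = i ∧ 3 ≤ q i)) : Hm m q k i = 0 := by
  rw [Finset.mem_Icc] at hk
  unfold Hm
  split_ifs with hki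
  · have hk' : k = i := by omega
    subst hk'
    have hs : k - 1 + 1 = k := by omega
    refine tens_eq_zero ⟨k - 1, by omega⟩ ?_
    unfold Hfac
    rw [if_neg (by simp; omega), if_neg (by simp; omega), if_pos rfl]
    refine locR_eq_zero ?_
    have := hq k
    simp only [hs]; omega
  · rfl

lemma sum_Hm_row {k : ℕ} (hk : 1 ≤ k) (n : ℕ) (hkn : k ≤ n) (hn : n ≤ m) :
    ∑ i ∈ Finset.Icc 1 n, Hm m q k i = Hm m q k k + (telE m q k n - telE m q k k) := by
  induction n, hkn using Nat.le_induction with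
  | base =>
    rw [sub_self, add_zero]
    refine Finset.sum_eq_single k (fun b hb hbk => ?_) (fun h => ?_)
    · rw [Finset.mem_Icc] at hb
      exact if_neg (by omega)
    · exact absurd (Finset.mem_Icc.2 ⟨hk, le_rfl⟩) h
  | succ n hkn ih =>
    rw [Finset.sum_Icc_succ_top (by omega), ih (by omega)]
    have : Hm m q k (n + 1) + telE m q k n = telE m q k (n + 1) := by
      unfold Hm telE
      rw [if_pos (by omega)]
      refine tens_add ⟨n, by omega⟩ ?_ ?_ ?_
      · simp only [Hfac]
        split_ifs <;> first | omega | simp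
      · intro s hs
        have : (s : ℕ) ≠ n := fun h => hs (Fin.ext h)
        simp only [Hfac]
        split_ifs <;> first | omega | rfl
      · intro s hs
        have : (s : ℕ) ≠ n := fun h => hs (Fin.ext h)
        split_ifs <;> first | omega | rfl
    rw [← this]; abel

lemma sum_Hm_col {i : ℕ} (hi : i ≤ m) (n : ℕ) (hn : n < i) :
    ∑ k ∈ Finset.Icc 1 n, Hm m q k i = telD m q i 1 - telD m q i (n + 1) := by
  induction n with
  | zero => simp
  | succ n ih =>
    rw [Finset.sum_Icc_succ_top (by omega), ih (by omega)]
    have : Hm m q (n + 1) i + telD m q i (n + 2) = telD m q i (n + 1) := by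
      unfold Hm telD
      rw [if_pos (by omega)]
      refine tens_add ⟨n, by omega⟩ ?_ ?_ ?_
      · simp only [Hfac]
        split_ifs <;> first | omega | simp
      · intro s hs
        have : (s : ℕ) ≠ n := fun h => hs (Fin.ext h)
        simp only [Hfac]
        split_ifs <;> first | omega | rfl
      · intro s hs
        have : (s : ℕ) ≠ n := fun h => hs (Fin.ext h)
        split_ifs <;> first | omega | rfl
    rw [← this]; abel

/-! ### The generators as sums of the `H_{k,i}` -/

lemma Fmat_eq (hq : ∀ i, 2 ≤ q i) {j : ℕ} (hj : j ≤ m) (hj1 : 1 ≤ j) :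
    Fmat m q j = telE m q (m - j + 1) (m - j + 1) - Hm m q (m - j + 1) (m - j + 1) := by
  have h1 : Fmat m q j = tens m q fun s =>
      if (s : ℕ) + 1 < m - j + 1 then locJ _ else if (s : ℕ) + 1 = m - j + 1 then
        ((q ((s : ℕ) + 1) : ℂ) / ((q ((s : ℕ) + 1) : ℂ) - 1)) •
          ((1 - locJ _) * locE _ * (1 - locJ _))
      else locE _ := by
    rw [Fmat, IdemOne_eq_s10, DualIdemOne_eq, tens_mul, tens_mul, Fintype.card_pi, multiplicity,
      Nat.cast_prod, Nat.cast_prod, ← Finset.prod_div_distrib, ← tens_smul]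
    congr 1
    funext s
    have h0 : (q ((s : ℕ) + 1) : ℂ) ≠ 0 := NeZero.ne _
    have h2 : ((q ((s : ℕ) + 1) - 1 : ℕ) : ℂ) = (q ((s : ℕ) + 1) : ℂ) - 1 := by
      have := hq (s + 1)
      rw [Nat.cast_sub (by omega), Nat.cast_one]
    rw [ZMod.card, if_neg (by omega : ¬ (s : ℕ) + 1 < 0), if_neg (by omega : ¬ (s : ℕ) + 1 = 0)]
    rcases lt_trichotomy ((s : ℕ) + 1) (m - j + 1) with h | h | h
    · simp only [if_pos h, if_neg h.ne, if_neg h.not_gt]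
      rw [locJ_E_J, smul_smul]; simp [h0]
    · simp only [if_pos h, if_neg h.not_lt, if_neg h.not_gt]
      rw [h2]
    · simp only [if_pos h, if_neg h.ne', if_neg h.not_gt]
      simp [h0]
  rw [h1, eq_sub_iff_add_eq]
  unfold telE Hm
  rw [if_pos le_rfl]
  refine tens_add ⟨m - j, by omega⟩ ?_ ?_ ?_
  · simp [Hfac, locR, locCore]
  · intro s hs
    have : (s : ℕ) ≠ m - j := fun h => hs (Fin.ext h)
    split_ifs <;> first | omega | rfl
  · intro s hs
    have : (s : ℕ) ≠ m - j := fun h => hs (Fin.ext h)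
    simp only [Hfac]
    split_ifs <;> first | omega | rfl

lemma FmatStar_eq (hq : ∀ i, 2 ≤ q i) {i : ℕ} (hi : i ≤ m) (hi1 : 1 ≤ i) :
    FmatStar m q i = telD m q i i - Hm m q i i := by
  have h1 : FmatStar m q i = tens m q fun s =>
      if (s : ℕ) + 1 < i then locJ _ else if (s : ℕ) + 1 = i then
        ((q ((s : ℕ) + 1) : ℂ) / ((q ((s : ℕ) + 1) : ℂ) - 1)) •
          ((1 - locE _) * locJ _ * (1 - locE _))
      else locE _ := by
    rw [FmatStar, IdemOne_eq_s10, DualIdemOne_eq, tens_mul, tens_mul, Fintype.card_pi, valency,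
      Nat.cast_prod, Nat.cast_prod, ← Finset.prod_div_distrib, ← tens_smul]
    congr 1
    funext s
    have hs := s.2
    have h0 : (q ((s : ℕ) + 1) : ℂ) ≠ 0 := NeZero.ne _
    have h2 : ((q ((s : ℕ) + 1) - 1 : ℕ) : ℂ) = (q ((s : ℕ) + 1) : ℂ) - 1 := by
      have := hq (s + 1)
      rw [Nat.cast_sub (by omega), Nat.cast_one]
    rw [ZMod.card, if_pos (by omega : (s : ℕ) + 1 < m - 0 + 1)]
    split_ifs
    · simp [h0]
    · rw [h2]
    · rw [locE_J_E, smul_smul]; simp [h0]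
  rw [h1, eq_sub_iff_add_eq]
  unfold telD Hm
  rw [if_pos le_rfl]
  obtain ⟨p, rfl⟩ : ∃ p, i = p + 1 := ⟨i - 1, by omega⟩
  refine tens_add ⟨p, by omega⟩ ?_ ?_ ?_
  · simp [Hfac, locR_symm _ (hq _), locCore]
  · intro s hs
    have : (s : ℕ) ≠ p := fun h => hs (Fin.ext h)
    split_ifs <;> first | omega | rfl
  · intro s hs
    have : (s : ℕ) ≠ p := fun h => hs (Fin.ext h)
    simp only [Hfac]
    split_ifs <;> first | omega | rfl

lemma Gmat_eq (hq : ∀ i, 2 ≤ q i) {j : ℕ} (hj : j ≤ m) (hj1 : 1 ≤ j) :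
    Gmat m q j = ∑ i ∈ Finset.Icc 1 m, Hm m q (m - j + 1) i := by
  have hE : IdemOne m q j = telE m q (m - j + 1) m := by
    rw [IdemOne_eq_s10, telE]
    congr 1
    funext s
    rw [if_pos (show (s : ℕ) + 1 ≤ m from s.2)]
  rw [sum_Hm_row (by omega) m (by omega) le_rfl, Gmat, Fmat_eq hq hj hj1, hE]
  abel

lemma GmatStar_eq (hq : ∀ i, 2 ≤ q i) {i : ℕ} (hi : i ≤ m) (hi1 : 1 ≤ i) :
    GmatStar m q i = ∑ k ∈ Finset.Icc 1 m, Hm m q k i := by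
  have hE : DualIdemOne m q i = telD m q i 1 := by
    rw [DualIdemOne_eq, telD]
    congr 1
    funext s
    split_ifs <;> first | omega | rfl
  have hs : ∑ k ∈ Finset.Icc 1 m, Hm m q k i = ∑ k ∈ Finset.Icc 1 i, Hm m q k i := by
    refine (Finset.sum_subset (Finset.Icc_subset_Icc_right hi) fun k _ hk => ?_).symm
    rw [Finset.mem_Icc] at hk
    rw [Finset.mem_Icc] at *
    exact if_neg (by omega)
  obtain ⟨p, rfl⟩ : ∃ p, i = p + 1 := ⟨i - 1, by omega⟩
  rw [hs, Finset.sum_Icc_succ_top (by omega), sum_Hm_col hi p (by omega), GmatStar,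
    FmatStar_eq hq hi hi1, hE]
  abel

/-- `G_j G*_i` is a single `H`, since all other products of summands vanish. -/
lemma Gmat_mul_GmatStar (hq : ∀ i, 2 ≤ q i) {i j : ℕ} (hi : i ∈ Finset.Icc 1 m)
    (hj : j ∈ Finset.Icc 1 m) :
    Gmat m q j * GmatStar m q i = Hm m q (m - j + 1) i := by
  have hi' := Finset.mem_Icc.1 hi
  have hj' := Finset.mem_Icc.1 hj
  have hk : m - j + 1 ∈ Finset.Icc 1 m := Finset.mem_Icc.2 (by omega)
  rw [Gmat_eq hq hj'.2 hj'.1, GmatStar_eq hq hi'.2 hi'.1, Finset.sum_mul_sum,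
    Finset.sum_eq_single i, Finset.sum_eq_single (m - j + 1)]
  · rw [Hm_mul hq hk hi hk hi, if_pos ⟨rfl, rfl⟩]
  · intro b hb hbk
    rw [Hm_mul hq hk hi hb hi, if_neg (fun h => hbk h.1.symm)]
  · exact fun h => absurd hk h
  · intro b hb hbi
    refine Finset.sum_eq_zero fun c hc => ?_
    rw [Hm_mul hq hk hb hc hi, if_neg (fun h => hbi h.2)]
  · exact fun h => absurd hi h

end H

/-! ### Algebras spanned by orthogonal idempotents -/

/-- Nonzero pairwise orthogonal idempotents are linearly independent. -/
lemma linInd_of_orth {A ι : Type*} [Ring A] [Algebra ℂ A] [DecidableEq ι] (v : ι → A)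
    (hne : ∀ p, v p ≠ 0) (hmul : ∀ p r, v p * v r = if p = r then v p else 0) :
    LinearIndependent ℂ v := by
  rw [linearIndependent_iff']
  intro s g hg p hp
  have := congrArg (· * v p) hg
  simp only [Finset.sum_mul, smul_mul_assoc, hmul, smul_ite, smul_zero, zero_mul,
    Finset.sum_ite_eq', if_pos hp] at this
  exact (smul_eq_zero.1 this).resolve_right (hne p)

/-- The span of pairwise orthogonal idempotents is commutative and closed under
multiplication. -/
lemma span_mul_comm_mem {A ι : Type*} [Ring A] [Algebra ℂ A] [DecidableEq ι] (v : ι → A)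
    (hmul : ∀ p r, v p * v r = if p = r then v p else 0) {x y : A}
    (hx : x ∈ Submodule.span ℂ (Set.range v)) (hy : y ∈ Submodule.span ℂ (Set.range v)) :
    x * y = y * x ∧ x * y ∈ Submodule.span ℂ (Set.range v) := by
  induction hx, hy using Submodule.span_induction₂ with
  | mem_mem x y hx hy =>
    obtain ⟨p, rfl⟩ := hx
    obtain ⟨r, rfl⟩ := hy
    rw [hmul, hmul]
    by_cases h : p = r
    · subst h
      simpa using Submodule.subset_span (Set.mem_range_self p)
    · simp [h, Ne.symm h]
  | zero_left y hy => simp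
  | zero_right x hx => simp
  | add_left x y z hx hy hz h1 h2 =>
    rw [add_mul, mul_add, h1.1, h2.1]
    exact ⟨rfl, add_mem (h1.1 ▸ h1.2) (h2.1 ▸ h2.2)⟩
  | add_right x y z hx hy hz h1 h2 =>
    rw [add_mul, mul_add, h1.1, h2.1]
    exact ⟨rfl, add_mem (h1.1 ▸ h1.2) (h2.1 ▸ h2.2)⟩
  | smul_left r x y hx hy h =>
    rw [smul_mul_assoc, mul_smul_comm, h.1]
    exact ⟨rfl, Submodule.smul_mem _ _ (h.1 ▸ h.2)⟩
  | smul_right r x y hx hy h =>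
    rw [smul_mul_assoc, mul_smul_comm, h.1]
    exact ⟨rfl, Submodule.smul_mem _ _ (h.1 ▸ h.2)⟩

/-- Assume `m ≥ 2` or `q_1 ≥ 3`. The non-unital ℂ-subalgebra generated by the
`G_j` and `G*_j` is commutative, the matrices `G_jG*_i` with `(i,j) ∈ Λ(m)`
form a ℂ-basis of it, and its dimension is `|Λ(m)|`. -/
theorem stmt10 (m : ℕ) (hm : 1 ≤ m) (q : ℕ → ℕ) [∀ i, NeZero (q i)]
    (hq : ∀ i, 2 ≤ q i) (hmq : 2 ≤ m ∨ 3 ≤ q 1) :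
    ∀ S : NonUnitalSubalgebra ℂ (Matrix (Vtx m q) (Vtx m q) ℂ),
      S = NonUnitalAlgebra.adjoin ℂ
            {M | ∃ j, 1 ≤ j ∧ j ≤ m ∧ (M = Gmat m q j ∨ M = GmatStar m q j)} →
      (∀ x ∈ S, ∀ y ∈ S, x * y = y * x) ∧
      LinearIndependent ℂ
        (fun p : ↥(LamSet m q) => Gmat m q p.1.2 * GmatStar m q p.1.1) ∧
      Submodule.span ℂ
          (Set.range (fun p : ↥(LamSet m q) =>
            Gmat m q p.1.2 * GmatStar m q p.1.1)) = S.toSubmodule ∧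
      Module.finrank ℂ ↥S.toSubmodule = (LamSet m q).card := by
  rintro S rfl
  set v : ↥(LamSet m q) → Matrix (Vtx m q) (Vtx m q) ℂ :=
    fun p => Gmat m q p.1.2 * GmatStar m q p.1.1 with hv
  have hLam : ∀ i j, (i, j) ∈ LamSet m q ↔ i ∈ Finset.Icc 1 m ∧ j ∈ Finset.Icc 1 m ∧
      (m - j + 1 < i ∨ m - j + 1 = i ∧ 3 ≤ q i) := by
    intro i j
    simp only [LamSet, Finset.mem_filter, Finset.mem_product, and_assoc, Finset.mem_Icc]
    constructor
    · rintro ⟨h1, h2, h3, h4, h5⟩; omega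
    · rintro ⟨h1, h2, h3, h4, h5⟩; omega
  have hvH : ∀ p, v p = Hm m q (m - p.1.2 + 1) p.1.1 := fun p =>
    have h := (hLam p.1.1 p.1.2).1 p.2
    Gmat_mul_GmatStar hq h.1 h.2.1
  have hne : ∀ p, v p ≠ 0 := fun p => by
    rw [hvH]; exact Hm_ne_zero hq ((hLam p.1.1 p.1.2).1 p.2).2.2
  have hmul : ∀ p r, v p * v r = if p = r then v p else 0 := by
    rintro ⟨⟨i, j⟩, hp⟩ ⟨⟨i', j'⟩, hr⟩
    obtain ⟨h1, h2, -⟩ := (hLam i j).1 hp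
    obtain ⟨h1', h2', -⟩ := (hLam i' j').1 hr
    rw [Finset.mem_Icc] at h2 h2'
    rw [hvH, hvH, Hm_mul hq (Finset.mem_Icc.2 (by dsimp only; omega)) h1
      (Finset.mem_Icc.2 (by dsimp only; omega)) h1']
    refine if_congr ?_ rfl rfl
    simp only [Subtype.mk.injEq, Prod.mk.injEq]
    omega
  -- Every `H_{k,i}` with indices in range lies in the span: it is zero or a basis element.
  have hH : ∀ k ∈ Finset.Icc 1 m, ∀ i ∈ Finset.Icc 1 m,
      Hm m q k i ∈ Submodule.span ℂ (Set.range v) := by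
    intro k hk i hi
    by_cases h : k < i ∨ k = i ∧ 3 ≤ q i
    · have hk' := Finset.mem_Icc.1 hk
      have hkk : m - (m - k + 1) + 1 = k := by omega
      have hp : (i, m - k + 1) ∈ LamSet m q :=
        (hLam _ _).2 ⟨hi, Finset.mem_Icc.2 (by omega), by rwa [hkk]⟩
      refine Submodule.subset_span ⟨⟨_, hp⟩, ?_⟩
      rw [hvH]
      simp only [hkk]
    · rw [Hm_eq_zero hq hk h]; exact Submodule.zero_mem _
  have hspan : Submodule.span ℂ (Set.range v) = (NonUnitalAlgebra.adjoin ℂ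
      {M | ∃ j, 1 ≤ j ∧ j ≤ m ∧ (M = Gmat m q j ∨ M = GmatStar m q j)}).toSubmodule := by
    apply le_antisymm
    · rw [Submodule.span_le]
      rintro _ ⟨p, rfl⟩
      obtain ⟨h1, h2, -⟩ := (hLam p.1.1 p.1.2).1 p.2
      rw [Finset.mem_Icc] at h1 h2
      change v p ∈ NonUnitalAlgebra.adjoin ℂ
        {M | ∃ j, 1 ≤ j ∧ j ≤ m ∧ (M = Gmat m q j ∨ M = GmatStar m q j)}
      exact mul_mem (NonUnitalAlgebra.subset_adjoin ℂ ⟨_, h2.1, h2.2, Or.inl rfl⟩)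
        (NonUnitalAlgebra.subset_adjoin ℂ ⟨_, h1.1, h1.2, Or.inr rfl⟩)
    · intro x hx
      let T : NonUnitalSubalgebra ℂ (Matrix (Vtx m q) (Vtx m q) ℂ) :=
        { Submodule.span ℂ (Set.range v) with
          mul_mem' := fun ha hb => (span_mul_comm_mem v hmul ha hb).2 }
      have hT : NonUnitalAlgebra.adjoin ℂ
          {M | ∃ j, 1 ≤ j ∧ j ≤ m ∧ (M = Gmat m q j ∨ M = GmatStar m q j)} ≤ T := by
        refine NonUnitalAlgebra.adjoin_le ?_
        rintro M ⟨j, h1, h2, rfl | rfl⟩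
        · rw [Gmat_eq hq h2 h1]
          exact Submodule.sum_mem _ fun i hi => hH _ (Finset.mem_Icc.2 (by omega)) i hi
        · rw [GmatStar_eq hq h2 h1]
          exact Submodule.sum_mem _ fun k hk => hH k hk j (Finset.mem_Icc.2 ⟨h1, h2⟩)
      exact hT hx
  have hli : LinearIndependent ℂ v := linInd_of_orth v hne hmul
  refine ⟨fun x hx y hy => ?_, hli, hspan, ?_⟩
  · have hx' : x ∈ Submodule.span ℂ (Set.range v) := by rw [hspan]; exact hx
    have hy' : y ∈ Submodule.span ℂ (Set.range v) := by rw [hspan]; exact hy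
    exact (span_mul_comm_mem v hmul hx' hy').1
  · rw [← hspan, finrank_span_eq_card hli, Fintype.card_coe]

end OHS

end
end
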